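/- arXiv:1403.6539 — 2 statements merged into one kernel-verified Lean document; each statement's English description precedes it below -/
import Mathlib

section
/- The global dimension of the down-up algebra A(α,β,φ) over K[t₁,…,tₙ] equals n+3, for all α, β ∈ K and φ ∈ K[t₁,…,tₙ]. -/
open MvPolynomial

namespace DownUp

inductive Gen | u | d

variable {K : Type} [Field K] {n : ℕ}

/-- Free algebra over the polynomial base ring on generators u, d. -/
abbrev F (K : Type) [Field K] (n : ℕ) := FreeAlgebra (MvPolynomial (Fin n) K) Gen

noncomputable def uF : F K n := FreeAlgebra.ι _ Gen.u
noncomputable def dF : F K n := FreeAlgebra.ι _ Gen.d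

/-- The defining relations of the down-up algebra over K[t₁,…,tₙ]. -/
inductive Rel (α β : K) (φ : MvPolynomial (Fin n) K) : F K n → F K n → Prop
  | ddu : Rel α β φ (dF * dF * uF)
      (α • (dF * uF * dF) + β • (uF * dF * dF) + algebraMap _ _ φ * dF)
  | duu : Rel α β φ (dF * uF * uF)
      (α • (uF * dF * uF) + β • (uF * uF * dF) + uF * algebraMap _ _ φ)

/-- The down-up algebra A(α,β,φ) over K[t₁,…,tₙ]. -/
abbrev A (α β : K) (φ : MvPolynomial (Fin n) K) := RingQuot (Rel α β φ)

noncomputable def U (α β : K) (φ : MvPolynomial (Fin n) K) : A α β φ :=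
  RingQuot.mkAlgHom K _ uF
noncomputable def D (α β : K) (φ : MvPolynomial (Fin n) K) : A α β φ :=
  RingQuot.mkAlgHom K _ dF

/-- Image of the base polynomial ring in A. -/
noncomputable def T (α β : K) (φ : MvPolynomial (Fin n) K) :
    MvPolynomial (Fin n) K →ₐ[K] A α β φ :=
  (RingQuot.mkAlgHom K (Rel α β φ)).comp (IsScalarTower.toAlgHom K (MvPolynomial (Fin n) K) (F K n))

end DownUp
open CategoryTheory in
/-- The (left) global dimension of a ring, as the supremum of the set of
degrees in which some Ext group of left modules is nonvanishing. -/
noncomputable def globalDim (A' : Type) [Ring A'] : ℕ∞ :=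
  sSup {m : ℕ∞ | ∃ k : ℕ, m = (k : ℕ∞) ∧ ∃ M N : ModuleCat.{0} A',
    Nontrivial (((_root_.Ext ℤ (ModuleCat.{0} A') k).obj (Opposite.op M)).obj N)}

/-!
Let `R = K[t₁,…,tₙ]`. Letting `A` act on a Verma-type module shows that the normal words
`uⁱ (du)ʲ dᵏ` form an `R`-basis of `A`. Every `A`-module `M` has a resolution
`0 → A ⊗ M → (A ⊗ M)² → (A ⊗ M)² → A ⊗ M → M → 0` by modules induced from `R`, whose middle
differential consists of the Fox derivatives of the two relations. It is exact because, on leading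
terms with respect to the length of words, stripping letters from the end of normal words is a
contracting homotopy. Since `A` is free over `R`, the induced modules have projective dimension at
most `gldim R = n` (Hilbert's syzygy theorem), which bounds the global dimension by `n + 3`.

Conversely, let `u` and `d` act by zero on `R` and `K`. The third differential of `R` has
coefficients in the augmentation ideal, so `R → K` defines a nonzero class in `Ext³(R, K)`. Each
variable `tᵢ` is central, a nonzerodivisor on the quotient of `R` by the previous ones, and zero on
`K`, so passing to the next quotient shifts this class up by one degree, until `Extⁿ⁺³(K, K) ≠ 0`.
-/

namespace DownUp

open Submodule TensorProduct

universe w v u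

/-! ### Filtrations and approximate contractions -/

section Filtration

variable {R Y : Type*} [CommRing R] [AddCommGroup Y] [Module R Y]

/-- `F` is an increasing, exhaustive filtration of `Y` that vanishes in negative degrees. -/
structure IsExhaustiveFiltration (F : ℤ → Submodule R Y) : Prop where
  mono : Monotone F
  eq_bot_of_neg : ∀ n < 0, F n = ⊥
  exists_mem : ∀ y, ∃ n, y ∈ F n

/-- The functions `s` and `t` contract the complex `f`, `g` up to terms of lower degree. Subtracting
`f (s y)` from a cycle `y` therefore lowers its degree, and the degree cannot become negative. -/
theorem IsExhaustiveFiltration.exact_of_approxHomotopy {X Z : Type*} [AddCommGroup X]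
    [AddCommGroup Z] {F : ℤ → Submodule R Y} (hF : IsExhaustiveFiltration F)
    (f : X →+ Y) (g : Y →+ Z) (hgf : g.comp f = 0) (s : Y → X) (t : Z → Y) (ht : t 0 = 0)
    (hst : ∀ n, ∀ y ∈ F n, y - f (s y) - t (g y) ∈ F (n - 1)) : Function.Exact f g := by
  have cycle_mem_range (n : ℕ) : ∀ y ∈ F (n - 1), g y = 0 → y ∈ f.range := by
    induction n with
    | zero =>
      intro y hy _
      rw [hF.eq_bot_of_neg _ (by simp), mem_bot] at hy
      exact hy ▸ zero_mem _
    | succ n ih =>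
      intro y hy hgy
      have hlow : y - f (s y) ∈ F (n - 1) := by
        simpa [hgy, ht] using hst _ y hy
      have hcycle : g (y - f (s y)) = 0 := by
        rw [map_sub, hgy, zero_sub, neg_eq_zero]
        exact DFunLike.congr_fun hgf (s y)
      simpa using add_mem (ih _ hlow hcycle) (AddMonoidHom.mem_range.2 ⟨s y, rfl⟩)
  intro y
  refine ⟨fun hgy => ?_, ?_⟩
  · obtain ⟨n, hn⟩ := hF.exists_mem y
    exact cycle_mem_range (n.toNat + 1) y (hF.mono (by simp) hn) hgy
  · rintro ⟨x, rfl⟩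
    exact DFunLike.congr_fun hgf x

theorem IsExhaustiveFiltration.injective_of_approxRetraction {Z : Type*} [AddCommGroup Z]
    {F : ℤ → Submodule R Y} (hF : IsExhaustiveFiltration F) (g : Y →+ Z) (t : Z → Y)
    (ht : t 0 = 0) (hgt : ∀ n, ∀ y ∈ F n, y - t (g y) ∈ F (n - 1)) : Function.Injective g := by
  have hexact := hF.exact_of_approxHomotopy (0 : Y →+ Y) g (by simp) id t ht
    (by simpa using hgt)
  refine (injective_iff_map_eq_zero g).2 fun y hy => ?_
  obtain ⟨x, rfl⟩ := (hexact y).1 hy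
  rfl

theorem IsExhaustiveFiltration.prod {Z : Type*} [AddCommGroup Z] [Module R Z]
    {F : ℤ → Submodule R Y} {G : ℤ → Submodule R Z} (hF : IsExhaustiveFiltration F)
    (hG : IsExhaustiveFiltration G) : IsExhaustiveFiltration fun n => (F n).prod (G n) where
  mono _ _ h := Submodule.prod_mono (hF.mono h) (hG.mono h)
  eq_bot_of_neg n hn := by rw [hF.eq_bot_of_neg n hn, hG.eq_bot_of_neg n hn, prod_bot]
  exists_mem y := by
    obtain ⟨n, hn⟩ := hF.exists_mem y.1
    obtain ⟨m, hm⟩ := hG.exists_mem y.2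
    exact ⟨max n m, hF.mono (le_max_left n m) hn, hG.mono (le_max_right n m) hm⟩

/-- The filtration of the span of a family `v` induced by giving `v x` the degree `deg x`. -/
def spanFiltration (R : Type*) {ι Y : Type*} [CommRing R] [AddCommGroup Y] [Module R Y]
    (v : ι → Y) (deg : ι → ℕ) (n : ℤ) : Submodule R Y :=
  span R (v '' {x | (deg x : ℤ) ≤ n})

variable {ι : Type*} {v : ι → Y} {deg : ι → ℕ}

theorem mem_spanFiltration {x : ι} {n : ℤ} (h : (deg x : ℤ) ≤ n) :
    v x ∈ spanFiltration R v deg n :=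
  subset_span ⟨x, h, rfl⟩

theorem spanFiltration_le {n : ℤ} {P : Submodule R Y}
    (h : ∀ x, (deg x : ℤ) ≤ n → v x ∈ P) : spanFiltration R v deg n ≤ P := by
  refine span_le.2 ?_
  rintro _ ⟨x, hx, rfl⟩
  exact h x hx

theorem isExhaustiveFiltration_spanFiltration (hv : span R (Set.range v) = ⊤) :
    IsExhaustiveFiltration (spanFiltration R v deg) where
  mono _ _ h := spanFiltration_le fun _ hx => mem_spanFiltration (hx.trans h)
  eq_bot_of_neg n hn := eq_bot_iff.2 <| spanFiltration_le fun x hx => by omega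
  exists_mem y := by
    have hy : y ∈ span R (Set.range v) := hv ▸ mem_top
    obtain ⟨c, rfl⟩ := Finsupp.mem_span_range_iff_exists_finsupp.1 hy
    refine ⟨(c.support.sup deg : ℕ), sum_mem fun x hx => smul_mem _ _ (mem_spanFiltration ?_)⟩
    exact_mod_cast Finset.le_sup hx

/-- The endomorphisms of order at most `k`: those that raise degrees in the filtration `F` by at
most `k`. -/
def orderLE (F : ℤ → Submodule R Y) (k : ℤ) : Submodule R (Module.End R Y) where
  carrier := {T | ∀ n, ∀ y ∈ F n, T y ∈ F (n + k)}
  add_mem' hS hT n y hy := add_mem (hS n y hy) (hT n y hy)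
  zero_mem' _ _ _ := zero_mem _
  smul_mem' c _ hT n y hy := smul_mem _ c (hT n y hy)

variable {F : ℤ → Submodule R Y}

theorem mul_mem_orderLE {S T : Module.End R Y} {j k : ℤ} (hS : S ∈ orderLE F j)
    (hT : T ∈ orderLE F k) : S * T ∈ orderLE F (j + k) := fun n y hy => by
  rw [add_comm j k, ← add_assoc]
  exact hS _ _ (hT n y hy)

theorem one_mem_orderLE : (1 : Module.End R Y) ∈ orderLE F 0 := fun n y hy => by
  simpa using hy

theorem pow_mem_orderLE {T : Module.End R Y} {k : ℤ} (hT : T ∈ orderLE F k) (m : ℕ) :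
    T ^ m ∈ orderLE F (m * k) := by
  induction m with
  | zero => simpa using one_mem_orderLE
  | succ m ih =>
    rw [pow_succ, Nat.cast_succ, add_one_mul]
    exact mul_mem_orderLE ih hT

theorem IsExhaustiveFiltration.orderLE_mono (hF : IsExhaustiveFiltration F) :
    Monotone (orderLE F) :=
  fun _ _ h _ hT n y hy => hF.mono (by omega) (hT n y hy)

theorem IsExhaustiveFiltration.mul_mem_orderLE (hF : IsExhaustiveFiltration F)
    {S T : Module.End R Y} {j k l : ℤ} (hS : S ∈ orderLE F j) (hT : T ∈ orderLE F k)
    (hl : j + k ≤ l) : S * T ∈ orderLE F l :=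
  hF.orderLE_mono hl (DownUp.mul_mem_orderLE hS hT)

theorem mem_orderLE_spanFiltration {T : Module.End R Y} {k : ℤ}
    (h : ∀ x, T (v x) ∈ spanFiltration R v deg (deg x + k)) :
    T ∈ orderLE (spanFiltration R v deg) k := fun n _ hy => by
  have hle : spanFiltration R v deg n ≤ (spanFiltration R v deg (n + k)).comap T :=
    spanFiltration_le fun x hx =>
      spanFiltration_le (fun x' hx' => mem_spanFiltration (by omega)) (h x)
  exact hle hy

section Tensor

variable (M : Type*) [AddCommGroup M] [Module R M]

/-- The filtration of `Y ⊗ M` by the images of `F n ⊗ M`. -/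
def tensorFiltration (F : ℤ → Submodule R Y) (n : ℤ) : Submodule R (Y ⊗[R] M) :=
  map₂ (TensorProduct.mk R Y M) (F n) ⊤

variable {M}

theorem tmul_mem_tensorFiltration {n : ℤ} {y : Y} (hy : y ∈ F n) (m : M) :
    y ⊗ₜ m ∈ tensorFiltration M F n :=
  apply_mem_map₂ _ hy mem_top

theorem IsExhaustiveFiltration.tensorFiltration (hF : IsExhaustiveFiltration F) :
    IsExhaustiveFiltration (tensorFiltration M F) where
  mono _ _ h := map₂_le_map₂_left (hF.mono h)
  eq_bot_of_neg n hn := by rw [DownUp.tensorFiltration, hF.eq_bot_of_neg n hn, map₂_bot_left]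
  exists_mem z := by
    have hmono : Monotone (DownUp.tensorFiltration M F) := fun _ _ h =>
      map₂_le_map₂_left (hF.mono h)
    induction z with
    | zero => exact ⟨0, zero_mem _⟩
    | tmul y m =>
      obtain ⟨n, hn⟩ := hF.exists_mem y
      exact ⟨n, tmul_mem_tensorFiltration hn m⟩
    | add x y hx hy =>
      obtain ⟨n, hn⟩ := hx
      obtain ⟨k, hk⟩ := hy
      exact ⟨max n k, add_mem (hmono (le_max_left n k) hn) (hmono (le_max_right n k) hk)⟩

theorem mem_orderLE_tensorFiltration {T : Module.End R (Y ⊗[R] M)} {k : ℤ}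
    (h : ∀ n, ∀ y ∈ F n, ∀ m, T (y ⊗ₜ m) ∈ tensorFiltration M F (n + k)) :
    T ∈ orderLE (tensorFiltration M F) k := fun n _ hz => by
  have hle : tensorFiltration M F n ≤ (tensorFiltration M F (n + k)).comap T :=
    map₂_le.2 fun y hy m _ => h n y hy m
  exact hle hz

theorem rTensor_mem_orderLE {T : Module.End R Y} {k : ℤ} (hT : T ∈ orderLE F k) :
    T.rTensor M ∈ orderLE (tensorFiltration M F) k :=
  mem_orderLE_tensorFiltration fun n y hy m => tmul_mem_tensorFiltration (hT n y hy) m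

theorem lTensor_mem_orderLE (T : Module.End R M) :
    T.lTensor Y ∈ orderLE (tensorFiltration M F) 0 :=
  mem_orderLE_tensorFiltration fun n y hy m =>
    tmul_mem_tensorFiltration (by simpa using hy) (T m)

end Tensor

end Filtration

/-! ### Induced modules -/

section InducedModule

variable {R A : Type*} [CommRing R] [Ring A] [Algebra R A]
variable (M : Type*) [AddCommGroup M] [Module R M]

/-- The `A`-linear endomorphism `a ⊗ m ↦ a x ⊗ m` of the induced module `A ⊗ M`. -/
noncomputable def innerMul (R : Type*) {A : Type*} [CommRing R] [Ring A] [Algebra R A]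
    (M : Type*) [AddCommGroup M] [Module R M] (x : A) : Module.End A (A ⊗[R] M) :=
  AlgebraTensorModule.rTensor R M (LinearMap.toSpanSingleton A A x)

@[simp]
theorem innerMul_tmul (x a : A) (m : M) : innerMul R M x (a ⊗ₜ m) = (a * x) ⊗ₜ m := rfl

variable [Module A M] [IsScalarTower R A M]

/-- The `A`-linear endomorphism `a ⊗ m ↦ a ⊗ x m` of the induced module `A ⊗ M`. -/
noncomputable def innerSMul (R : Type*) {A : Type*} [CommRing R] [Ring A] [Algebra R A]
    (M : Type*) [AddCommGroup M] [Module R M] [Module A M] [IsScalarTower R A M] (x : A) :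
    Module.End A (A ⊗[R] M) :=
  (Algebra.lsmul R R M x).baseChange A

@[simp]
theorem innerSMul_tmul (x a : A) (m : M) : innerSMul R M x (a ⊗ₜ m) = a ⊗ₜ (x • m) := rfl

/-- The `A`-linear map `a ⊗ m ↦ a m` from the induced module `A ⊗ M` to `M`. -/
noncomputable def actionMap (R A M : Type*) [CommRing R] [Ring A] [Algebra R A]
    [AddCommGroup M] [Module R M] [Module A M] [IsScalarTower R A M] : A ⊗[R] M →ₗ[A] M :=
  AlgebraTensorModule.lift (LinearMap.toSpanSingleton A (M →ₗ[R] M) LinearMap.id)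

@[simp]
theorem actionMap_tmul (a : A) (m : M) : actionMap R A M (a ⊗ₜ m) = a • m := rfl

theorem actionMap_surjective : Function.Surjective (actionMap R A M) :=
  fun m => ⟨1 ⊗ₜ m, by simp⟩

theorem mul_tmul_sub_tmul_smul_mem {s : Set A} (hs : Algebra.adjoin R s = ⊤) (a b : A) (m : M) :
    (b * a) ⊗ₜ[R] m - b ⊗ₜ (a • m) ∈
      ⨆ x ∈ s, LinearMap.range (innerMul R M x - innerSMul R M x) := by
  have ha : a ∈ Algebra.adjoin R s := hs ▸ Algebra.mem_top
  induction ha using Algebra.adjoin_induction generalizing b m with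
  | mem x hx => exact mem_iSup_of_mem x (mem_iSup_of_mem hx ⟨b ⊗ₜ m, rfl⟩)
  | algebraMap r =>
    rw [algebraMap_smul, ← Algebra.commutes, ← Algebra.smul_def, smul_tmul, sub_self]
    exact zero_mem _
  | add x y _ _ hx hy =>
    rw [mul_add, add_smul, add_tmul, tmul_add, add_sub_add_comm]
    exact add_mem (hx b m) (hy b m)
  | mul x y _ _ hx hy =>
    rw [← mul_assoc, mul_smul, ← sub_add_sub_cancel _ ((b * x) ⊗ₜ[R] (y • m))]
    exact add_mem (hy (b * x) m) (hx b (y • m))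

theorem ker_actionMap {s : Set A} (hs : Algebra.adjoin R s = ⊤) :
    LinearMap.ker (actionMap R A M) =
      ⨆ x ∈ s, LinearMap.range (innerMul R M x - innerSMul R M x) := by
  refine le_antisymm (fun z hz => ?_) (iSup₂_le fun x _ => ?_)
  · have sub_one_tmul_mem (z : A ⊗[R] M) : z - 1 ⊗ₜ actionMap R A M z ∈
        ⨆ x ∈ s, LinearMap.range (innerMul R M x - innerSMul R M x) := by
      induction z with
      | zero => simp
      | tmul a m => simpa using mul_tmul_sub_tmul_smul_mem M hs a 1 m
      | add y z hy hz =>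
        rw [map_add, tmul_add, add_sub_add_comm]
        exact add_mem hy hz
    simpa only [LinearMap.mem_ker.1 hz, tmul_zero, sub_zero] using sub_one_tmul_mem z
  · rw [LinearMap.range_le_ker_iff]
    ext m
    simp

end InducedModule

/-! ### Projective dimension -/

section ProjDim

open CategoryTheory

section ProjectiveDimension

variable {A : Type u} [Ring A] {X Y Z : Type u} [AddCommGroup X] [AddCommGroup Y]
  [AddCommGroup Z] [Module A X] [Module A Y] [Module A Z]

/-- The `A`-module `M` has projective dimension at most `n`. -/
abbrev ProjDimLE (A : Type u) [Ring A] (M : Type u) [AddCommGroup M] [Module A M] (n : ℕ) : Prop :=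
  HasProjectiveDimensionLE (ModuleCat.of A M) n

theorem ProjDimLE.mono {m n : ℕ} (hX : ProjDimLE A X m) (hmn : m ≤ n) : ProjDimLE A X n :=
  have := hX
  hasProjectiveDimensionLT_of_ge _ (m + 1) (n + 1) (by omega)

theorem ProjDimLE.prod {n : ℕ} (hX : ProjDimLE A X n) (hY : ProjDimLE A Y n) :
    ProjDimLE A (X × Y) n :=
  (ModuleCat.shortComplex_shortExact
    (ModuleCat.shortComplexOfCompEqZero (LinearMap.inl A X Y) (LinearMap.snd A X Y)
      (LinearMap.snd_comp_inl A X Y))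
    Function.Exact.inl_snd LinearMap.inl_injective LinearMap.snd_surjective
    ).hasProjectiveDimensionLT_X₂ _ hX hY

theorem projDimLE_zero_iff : ProjDimLE A X 0 ↔ Module.Projective A X := by
  rw [IsProjective.iff_projective, projective_iff_hasProjectiveDimensionLT_one]

/-- The short complex `range f → Y → range g` obtained by splicing an exact sequence
`X → Y → Z`. -/
abbrev spliceComplex (f : X →ₗ[A] Y) (g : Y →ₗ[A] Z) (hfg : Function.Exact f g) :
    ShortComplex (ModuleCat.{u} A) :=
  ModuleCat.shortComplexOfCompEqZero (LinearMap.range f).subtype g.rangeRestrict <| by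
    ext ⟨y, hy⟩
    exact (hfg y).2 hy

theorem spliceComplex_shortExact {f : X →ₗ[A] Y} {g : Y →ₗ[A] Z} (hfg : Function.Exact f g) :
    (spliceComplex f g hfg).ShortExact := by
  refine ModuleCat.shortComplex_shortExact _ ?_ (injective_subtype _)
    g.surjective_rangeRestrict
  refine LinearMap.exact_iff.2 ?_
  simp [LinearMap.exact_iff.1 hfg]

theorem ProjDimLE.range_of_exact {f : X →ₗ[A] Y} {g : Y →ₗ[A] Z} (hfg : Function.Exact f g)
    {n : ℕ} (hf : ProjDimLE A (LinearMap.range f) n) (hY : ProjDimLE A Y (n + 1)) :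
    ProjDimLE A (LinearMap.range g) (n + 1) :=
  (spliceComplex_shortExact hfg).hasProjectiveDimensionLT_X₃ _ hf hY

theorem ProjDimLE.of_linearEquiv {n : ℕ} (hX : ProjDimLE A X n) (e : X ≃ₗ[A] Y) :
    ProjDimLE A Y n :=
  have := hX
  ModuleCat.hasProjectiveDimensionLE_of_linearEquiv (M := ModuleCat.of A X) e n

theorem ProjDimLE.range_of_injective {n : ℕ} (hX : ProjDimLE A X n) {f : X →ₗ[A] Y}
    (hf : Function.Injective f) : ProjDimLE A (LinearMap.range f) n :=
  hX.of_linearEquiv (LinearEquiv.ofInjective f hf)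

theorem ProjDimLE.of_range_of_surjective {f : X →ₗ[A] Y} {n : ℕ}
    (h : ProjDimLE A (LinearMap.range f) n) (hf : Function.Surjective f) : ProjDimLE A Y n :=
  h.of_linearEquiv (LinearEquiv.ofTop _ (LinearMap.range_eq_top.2 hf))

end ProjectiveDimension

section BaseChange

variable {S : Type u} [CommRing S] (B : Type u) [Ring B] [Algebra S B] [Module.Flat S B] {n : ℕ}

theorem ProjDimLE.baseChange_of_shortExact {X Y Z : Type u} [AddCommGroup X] [AddCommGroup Y]
    [AddCommGroup Z] [Module S X] [Module S Y] [Module S Z] {f : X →ₗ[S] Y} {g : Y →ₗ[S] Z}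
    (hf : Function.Injective f) (hfg : Function.Exact f g) (hg : Function.Surjective g)
    (hX : ProjDimLE B (B ⊗[S] X) n) (hY : ProjDimLE B (B ⊗[S] Y) (n + 1)) :
    ProjDimLE B (B ⊗[S] Z) (n + 1) := by
  have hexact : Function.Exact (f.lTensor B) (g.lTensor B) := lTensor_exact B hfg hg
  have hexactB : Function.Exact (f.baseChange B) (g.baseChange B) := hexact
  have hinj : Function.Injective (f.baseChange B) :=
    Module.Flat.lTensor_preserves_injective_linearMap f hf
  exact (ProjDimLE.range_of_exact hexactB (hX.range_of_injective hinj) hY).of_range_of_surjective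
    (LinearMap.lTensor_surjective B hg)

theorem ProjDimLE.baseChange {M : Type u} [AddCommGroup M] [Module S M] (hM : ProjDimLE S M n) :
    ProjDimLE B (B ⊗[S] M) n := by
  induction n generalizing M with
  | zero =>
    rw [projDimLE_zero_iff] at *
    infer_instance
  | succ n ih =>
    let π : (M →₀ S) →ₗ[S] M := Finsupp.linearCombination S id
    have hπ : Function.Surjective π := Finsupp.linearCombination_id_surjective S M
    have hexact : Function.Exact (LinearMap.ker π).subtype π := LinearMap.exact_subtype_ker_map π
    have hker : ProjDimLE S (LinearMap.ker π) n :=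
      (ModuleCat.shortComplex_shortExact
        (ModuleCat.shortComplexOfCompEqZero _ _ hexact.linearMap_comp_eq_zero) hexact
        (injective_subtype _) hπ).hasProjectiveDimensionLT_X₁ _
          ((projDimLE_zero_iff.2 inferInstance).mono (Nat.zero_le n)) hM
    exact ProjDimLE.baseChange_of_shortExact B (X := LinearMap.ker π) (Y := M →₀ S)
      (injective_subtype _) hexact hπ (ih hker)
      ((projDimLE_zero_iff.2 inferInstance).mono (Nat.zero_le _))

end BaseChange

section GlobalDimension

/-- Every `A`-module has projective dimension at most `n`. -/
def GlobalDimLE (A : Type u) [Ring A] (n : ℕ) : Prop :=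
  ∀ (M : Type u) [AddCommGroup M] [Module A M], ProjDimLE A M n

theorem GlobalDimLE.of_ringEquiv {R S : Type u} [Ring R] [Ring S] {n : ℕ} (hR : GlobalDimLE R n)
    (e : R ≃+* S) : GlobalDimLE S n := by
  intro M _ _
  let : Module R M := Module.compHom M e.toRingHom
  let := RingHomInvPair.of_ringEquiv e
  let := RingHomInvPair.of_ringEquiv e.symm
  have := hR M
  let f : ModuleCat.of R M ≃ₛₗ[RingHomClass.toRingHom e] ModuleCat.of S M :=
    { AddEquiv.refl M with map_smul' := fun _ _ => rfl }
  exact ModuleCat.hasProjectiveDimensionLE_of_semiLinearEquiv e f n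

theorem globalDimLE_of_isScalarTower (R : Type u) {A : Type u} [CommRing R] [Ring A] [Algebra R A]
    {n : ℕ} (h : ∀ (M : Type u) [AddCommGroup M] [Module R M] [Module A M] [IsScalarTower R A M],
      ProjDimLE A M n) : GlobalDimLE A n := by
  intro M _ _
  let : Module R M := Module.compHom M (algebraMap R A)
  have : IsScalarTower R A M := IsScalarTower.of_algebraMap_smul fun _ _ => rfl
  exact h M

end GlobalDimension

section PolynomialRing

open scoped Polynomial

variable {S : Type u} [CommRing S]

/-- The `S`-linear map dropping the constant coefficient of a polynomial and dividing by `X`. -/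
noncomputable def divXLinear (S : Type u) [CommRing S] : Module.End S S[X] where
  toFun := Polynomial.divX
  map_add' _ _ := Polynomial.divX_add
  map_smul' r p := by ext; simp [Polynomial.coeff_divX]

theorem divXLinear_mul_X (p : S[X]) : divXLinear S (p * Polynomial.X) = p := by
  ext k
  simp [divXLinear, Polynomial.coeff_divX]

theorem divXLinear_mem_orderLE :
    divXLinear S ∈ orderLE (spanFiltration S (fun n => (Polynomial.X : S[X]) ^ n) id) (-1) := by
  refine mem_orderLE_spanFiltration fun n => ?_
  rcases n with _ | n
  · simp [divXLinear]
  · simp only [pow_succ, divXLinear_mul_X]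
    exact mem_spanFiltration (by simp)

theorem span_range_X_pow : span S (Set.range fun n => (Polynomial.X : S[X]) ^ n) = ⊤ := by
  simpa [Polynomial.X_pow_eq_monomial] using (Polynomial.basisMonomials S).span_eq

variable (M : Type u) [AddCommGroup M] [Module S M] [Module S[X] M] [IsScalarTower S S[X] M]

theorem innerMul_X_sub_innerSMul_X_injective :
    Function.Injective
      (innerMul S M (Polynomial.X : S[X]) - innerSMul S M (Polynomial.X : S[X])) := by
  have hF := (isExhaustiveFiltration_spanFiltration
    (deg := id) (span_range_X_pow (S := S))).tensorFiltration (M := M)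
  refine hF.injective_of_approxRetraction
    (innerMul S M (Polynomial.X : S[X]) - innerSMul S M (Polynomial.X : S[X])).toAddMonoidHom
    ((divXLinear S).rTensor M) (map_zero _) fun n z hz => ?_
  have hmul (z : S[X] ⊗[S] M) :
      (divXLinear S).rTensor M (innerMul S M (Polynomial.X : S[X]) z) = z := by
    induction z with
    | zero => simp
    | tmul p m => simp [divXLinear_mul_X]
    | add y z hy hz => simp [hy, hz]
  have hsmul : (divXLinear S).rTensor M (innerSMul S M (Polynomial.X : S[X]) z) ∈ _ :=
    mul_mem_orderLE (rTensor_mem_orderLE divXLinear_mem_orderLE)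
      (lTensor_mem_orderLE (Algebra.lsmul S S M (Polynomial.X : S[X]))) n z hz
  simpa [hmul, sub_eq_add_neg] using hsmul

theorem GlobalDimLE.polynomial {n : ℕ} (hS : GlobalDimLE S n) : GlobalDimLE S[X] (n + 1) := by
  refine globalDimLE_of_isScalarTower S fun M _ _ _ _ => ?_
  have hinduced : ProjDimLE S[X] (S[X] ⊗[S] M) n := (hS M).baseChange S[X]
  have hexact : Function.Exact
      (innerMul S M (Polynomial.X : S[X]) - innerSMul S M (Polynomial.X : S[X]))
      (actionMap S S[X] M) := by
    rw [LinearMap.exact_iff, ker_actionMap M Polynomial.adjoin_X, iSup_singleton]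
  exact (ProjDimLE.range_of_exact hexact
    (hinduced.range_of_injective (innerMul_X_sub_innerSMul_X_injective M))
    (hinduced.mono n.le_succ)).of_range_of_surjective (actionMap_surjective M)

theorem globalDimLE_mvPolynomial (K : Type u) [Field K] (n : ℕ) :
    GlobalDimLE (MvPolynomial (Fin n) K) n := by
  induction n with
  | zero =>
    have hK : GlobalDimLE K 0 := fun M _ _ => projDimLE_zero_iff.2 inferInstance
    exact hK.of_ringEquiv (MvPolynomial.isEmptyRingEquiv K (Fin 0)).symm
  | succ n ih =>
    exact ih.polynomial.of_ringEquiv (MvPolynomial.finSuccEquiv K n).toRingEquiv.symm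

end PolynomialRing

end ProjDim

/-! ### Normal words span -/

section NormalWords

variable {R A : Type*} [CommRing R] [Ring A] [Algebra R A]

/-- The elements `u` and `d` satisfy the defining relations of a down-up algebra, with all three
parameters allowed to lie in the base ring. -/
structure DownUpRel (α β φ : R) (u d : A) : Prop where
  ddu : d * d * u = α • (d * u * d) + β • (u * d * d) + φ • d
  duu : d * u * u = α • (u * d * u) + β • (u * u * d) + φ • u

namespace DownUpRel

variable {α β φ : R} {u d : A}

theorem mul_ddu (h : DownUpRel α β φ u d) (a : A) :
    a * d * d * u = α • (a * d * u * d) + β • (a * u * d * d) + φ • (a * d) := by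
  simpa only [mul_add, mul_assoc, mul_smul_comm] using congrArg (a * ·) h.ddu

theorem mul_duu (h : DownUpRel α β φ u d) (a : A) :
    a * d * u * u = α • (a * u * d * u) + β • (a * u * u * d) + φ • (a * u) := by
  simpa only [mul_add, mul_assoc, mul_smul_comm] using congrArg (a * ·) h.duu

end DownUpRel

/-- The normal word `uⁱ (du)ʲ dᵏ`. -/
def normalWord (u d : A) (x : ℕ × ℕ × ℕ) : A :=
  u ^ x.1 * (d * u) ^ x.2.1 * d ^ x.2.2

/-- The number of letters of the normal word with exponents `x`. -/
def wordLength (x : ℕ × ℕ × ℕ) : ℕ :=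
  x.1 + 2 * x.2.1 + x.2.2

theorem u_mul_normalWord (u d : A) (i j k : ℕ) :
    u * normalWord u d (i, j, k) = normalWord u d (i + 1, j, k) := by
  simp [normalWord, pow_succ', mul_assoc]

theorem du_mul_normalWord (u d : A) (j k : ℕ) :
    d * u * normalWord u d (0, j, k) = normalWord u d (0, j + 1, k) := by
  simp [normalWord, pow_succ', mul_assoc]

theorem d_mul_normalWord (u d : A) (k : ℕ) :
    d * normalWord u d (0, 0, k) = normalWord u d (0, 0, k + 1) := by
  simp [normalWord, pow_succ']

theorem normalWord_mul_d (u d : A) (i j k : ℕ) :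
    normalWord u d (i, j, k) * d = normalWord u d (i, j, k + 1) := by
  simp [normalWord, pow_succ, mul_assoc]

theorem normalWord_mul_d_mul_u (u d : A) (i j : ℕ) :
    normalWord u d (i, j, 0) * d * u = normalWord u d (i, j + 1, 0) := by
  simp [normalWord, pow_succ, mul_assoc]

theorem normalWord_mul_u (u d : A) (i : ℕ) :
    normalWord u d (i, 0, 0) * u = normalWord u d (i + 1, 0, 0) := by
  simp [normalWord, pow_succ]

/-- The span of the normal words of length at most `n` with fewer than `N` factors `u` or `du`. -/
def wordSpan (R : Type*) {A : Type*} [CommRing R] [Ring A] [Algebra R A] (u d : A) (N n : ℕ) :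
    Submodule R A :=
  span R (normalWord u d '' {x | x.1 + x.2.1 < N ∧ wordLength x ≤ n})

section WordSpan

variable {u d : A} {N n : ℕ}

theorem normalWord_mem_wordSpan {i j k : ℕ} (hN : i + j < N) (hn : i + 2 * j + k ≤ n) :
    normalWord u d (i, j, k) ∈ wordSpan R u d N n :=
  subset_span ⟨(i, j, k), ⟨hN, hn⟩, rfl⟩

theorem wordSpan_le {P : Submodule R A}
    (h : ∀ i j k, i + j < N → i + 2 * j + k ≤ n → normalWord u d (i, j, k) ∈ P) :
    wordSpan R u d N n ≤ P := by
  refine span_le.2 ?_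
  rintro _ ⟨⟨i, j, k⟩, ⟨hN, hn⟩, rfl⟩
  exact h i j k hN hn

theorem wordSpan_mono {N' n' : ℕ} (hN : N ≤ N') (hn : n ≤ n') :
    wordSpan R u d N n ≤ wordSpan R u d N' n' :=
  wordSpan_le fun _ _ _ h₁ h₂ => normalWord_mem_wordSpan (by omega) (by omega)

theorem u_mul_mem_wordSpan {a : A} (ha : a ∈ wordSpan R u d N n) :
    u * a ∈ wordSpan R u d (N + 1) (n + 1) := by
  have hle : wordSpan R u d N n ≤
      (wordSpan R u d (N + 1) (n + 1)).comap (LinearMap.mulLeft R u) :=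
    wordSpan_le fun i j k hN hn => by
      rw [mem_comap, LinearMap.mulLeft_apply, u_mul_normalWord]
      exact normalWord_mem_wordSpan (by omega) (by omega)
  exact hle ha

namespace DownUpRel

variable {α β φ : R}

theorem d_mul_mem_wordSpan_succ (h : DownUpRel α β φ u d)
    (hd : ∀ n, ∀ a ∈ wordSpan R u d N n, d * a ∈ wordSpan R u d N (n + 1))
    (hdu : ∀ n, ∀ a ∈ wordSpan R u d N n, d * u * a ∈ wordSpan R u d (N + 1) (n + 2)) :
    ∀ n, wordSpan R u d (N + 1) n ≤
      (wordSpan R u d (N + 1) (n + 1)).comap (LinearMap.mulLeft R d) := by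
  refine fun n => wordSpan_le fun i j k hN hn => ?_
  rw [mem_comap, LinearMap.mulLeft_apply]
  rcases i with _ | i
  · rcases j with _ | j
    · rw [d_mul_normalWord]
      exact normalWord_mem_wordSpan (by omega) (by omega)
    · obtain ⟨n, rfl⟩ : ∃ m, n = m + 2 := ⟨n - 2, by omega⟩
      have hw : d * normalWord u d (0, j, k) ∈ wordSpan R u d N (n + 1) :=
        hd _ _ (normalWord_mem_wordSpan (by omega) (by omega))
      rw [← du_mul_normalWord, ← mul_assoc, ← mul_assoc, h.ddu]
      simp only [add_mul, smul_mul_assoc, mul_assoc u, mul_assoc d d, mul_assoc (d * u)]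
      exact add_mem (add_mem (smul_mem _ _ (hdu _ _ hw))
        (smul_mem _ _ (u_mul_mem_wordSpan (hd _ _ hw))))
        (smul_mem _ _ (wordSpan_mono (by omega) (by omega) hw))
  · obtain ⟨n, rfl⟩ : ∃ m, n = m + 1 := ⟨n - 1, by omega⟩
    rw [← u_mul_normalWord, ← mul_assoc]
    exact hdu _ _ (normalWord_mem_wordSpan (by omega) (by omega))

theorem du_mul_mem_wordSpan_succ (h : DownUpRel α β φ u d)
    (hd : ∀ n, ∀ a ∈ wordSpan R u d N n, d * a ∈ wordSpan R u d N (n + 1))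
    (hdu : ∀ n, ∀ a ∈ wordSpan R u d N n, d * u * a ∈ wordSpan R u d (N + 1) (n + 2)) :
    ∀ n, wordSpan R u d (N + 1) n ≤
      (wordSpan R u d (N + 2) (n + 2)).comap (LinearMap.mulLeft R (d * u)) := by
  refine fun n => wordSpan_le fun i j k hN hn => ?_
  rw [mem_comap, LinearMap.mulLeft_apply]
  rcases i with _ | i
  · rw [du_mul_normalWord]
    exact normalWord_mem_wordSpan (by omega) (by omega)
  · obtain ⟨n, rfl⟩ : ∃ m, n = m + 1 := ⟨n - 1, by omega⟩
    have hw : normalWord u d (i, j, k) ∈ wordSpan R u d N n :=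
      normalWord_mem_wordSpan (by omega) (by omega)
    rw [← u_mul_normalWord, ← mul_assoc, h.duu]
    simp only [add_mul, smul_mul_assoc, mul_assoc u]
    exact add_mem (add_mem (smul_mem _ _ (u_mul_mem_wordSpan (hdu _ _ hw)))
      (smul_mem _ _ (u_mul_mem_wordSpan (u_mul_mem_wordSpan (hd _ _ hw)))))
      (smul_mem _ _ (wordSpan_mono (by omega) (by omega) (u_mul_mem_wordSpan hw)))

/-- The relations rewrite `d·(du)` and `(du)·u` into words with fewer factors to move past, which
is why the two inclusions have to be proved by a simultaneous induction on that number. -/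
theorem d_mul_and_du_mul_mem_wordSpan (h : DownUpRel α β φ u d) (N : ℕ) :
    (∀ n, ∀ a ∈ wordSpan R u d N n, d * a ∈ wordSpan R u d N (n + 1)) ∧
      ∀ n, ∀ a ∈ wordSpan R u d N n, d * u * a ∈ wordSpan R u d (N + 1) (n + 2) := by
  induction N with
  | zero =>
    have eq_zero (n : ℕ) (a : A) (ha : a ∈ wordSpan R u d 0 n) : a = 0 := by
      simpa [wordSpan] using ha
    constructor <;> intro n a ha <;> rw [eq_zero n a ha, mul_zero] <;> exact zero_mem _
  | succ N ih =>
    exact ⟨fun n _ ha => h.d_mul_mem_wordSpan_succ ih.1 ih.2 n ha,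
      fun n _ ha => h.du_mul_mem_wordSpan_succ ih.1 ih.2 n ha⟩

end DownUpRel

end WordSpan

/-- The filtration of a down-up algebra by the length of normal words. -/
abbrev lengthFiltration (R : Type*) {A : Type*} [CommRing R] [Ring A] [Algebra R A] (u d : A) :
    ℤ → Submodule R A :=
  spanFiltration R (normalWord u d) wordLength

theorem normalWord_mem_lengthFiltration (R : Type*) {A : Type*} [CommRing R] [Ring A]
    [Algebra R A] (u d : A) {i j k : ℕ} {n : ℤ} (h : (i + 2 * j + k : ℤ) ≤ n) :
    normalWord u d (i, j, k) ∈ lengthFiltration R u d n :=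
  mem_spanFiltration (by simpa [wordLength] using h)

theorem mulLeft_u_mem_orderLE (u d : A) :
    LinearMap.mulLeft R u ∈ orderLE (lengthFiltration R u d) 1 := by
  refine mem_orderLE_spanFiltration fun ⟨i, j, k⟩ => ?_
  rw [LinearMap.mulLeft_apply, u_mul_normalWord]
  exact normalWord_mem_lengthFiltration R u d (by simp [wordLength]; omega)

namespace DownUpRel

variable {α β φ : R} {u d : A}

theorem mulLeft_d_mem_orderLE (h : DownUpRel α β φ u d) :
    LinearMap.mulLeft R d ∈ orderLE (lengthFiltration R u d) 1 := by
  refine mem_orderLE_spanFiltration fun ⟨i, j, k⟩ => ?_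
  have hle : wordSpan R u d (i + j + 1) (i + 2 * j + k + 1) ≤
      lengthFiltration R u d (wordLength (i, j, k) + 1) :=
    wordSpan_le fun _ _ _ _ hn => normalWord_mem_lengthFiltration R u d (by
      simp only [wordLength]; omega)
  exact hle ((h.d_mul_and_du_mul_mem_wordSpan _).1 _ _
    (normalWord_mem_wordSpan (Nat.lt_succ_self _) le_rfl))

theorem mulLeft_normalWord_mem_orderLE (h : DownUpRel α β φ u d) (x : ℕ × ℕ × ℕ) :
    LinearMap.mulLeft R (normalWord u d x) ∈ orderLE (lengthFiltration R u d) (wordLength x) := by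
  have hu := mulLeft_u_mem_orderLE (R := R) u d
  have hd := h.mulLeft_d_mem_orderLE
  have hword := mul_mem_orderLE (mul_mem_orderLE (pow_mem_orderLE hu x.1)
    (pow_mem_orderLE (mul_mem_orderLE hd hu) x.2.1)) (pow_mem_orderLE hd x.2.2)
  have hlength : (wordLength x : ℤ) = x.1 * 1 + x.2.1 * (1 + 1) + x.2.2 * 1 := by
    simp only [wordLength]
    push_cast
    ring
  rw [hlength]
  simpa only [normalWord, Module.End.mul_eq_comp, ← LinearMap.mulLeft_mul,
    LinearMap.pow_mulLeft] using hword

theorem mulRight_mem_orderLE (h : DownUpRel α β φ u d) {c : A} {m : ℤ}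
    (hc : c ∈ lengthFiltration R u d m) :
    LinearMap.mulRight R c ∈ orderLE (lengthFiltration R u d) m := by
  refine mem_orderLE_spanFiltration fun x => ?_
  rw [add_comm]
  exact h.mulLeft_normalWord_mem_orderLE x m c hc

theorem span_range_normalWord (h : DownUpRel α β φ u d)
    (hgen : Algebra.adjoin R {u, d} = ⊤) : span R (Set.range (normalWord u d)) = ⊤ := by
  have mul_mem (c : A) (hc : LinearMap.mulLeft R c ∈ orderLE (lengthFiltration R u d) 1) :
      span R (Set.range (normalWord u d)) ≤
        (span R (Set.range (normalWord u d))).comap (LinearMap.mulLeft R c) := by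
    refine span_le.2 ?_
    rintro _ ⟨x, rfl⟩
    exact span_mono (Set.image_subset_range _ _) (hc _ _ (mem_spanFiltration le_rfl))
  have adjoin_mul_mem (a : A) (ha : a ∈ Algebra.adjoin R {u, d}) :
      ∀ b ∈ span R (Set.range (normalWord u d)), a * b ∈ span R (Set.range (normalWord u d)) := by
    induction ha using Algebra.adjoin_induction with
    | mem c hc =>
      rcases hc with rfl | rfl
      · exact mul_mem c (mulLeft_u_mem_orderLE c d)
      · exact mul_mem c h.mulLeft_d_mem_orderLE
    | algebraMap r =>
      exact fun b hb => Algebra.smul_def r b ▸ smul_mem _ r hb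
    | add a b _ _ ha hb => exact fun c hc => add_mul a b c ▸ add_mem (ha c hc) (hb c hc)
    | mul a b _ _ ha hb => exact fun c hc => (mul_assoc a b c).symm ▸ ha _ (hb c hc)
  refine eq_top_iff.2 fun a _ => ?_
  have one_mem : (1 : A) ∈ span R (Set.range (normalWord u d)) :=
    subset_span ⟨0, by simp [normalWord]⟩
  simpa using adjoin_mul_mem a (hgen ▸ Algebra.mem_top) 1 one_mem

end DownUpRel

end NormalWords

/-! ### Normal words are independent -/

section Independence

open scoped Polynomial

theorem linearIndependent_of_triangular {R V ι : Type*} [CommRing R] [AddCommGroup V] [Module R V]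
    [DecidableEq ι] {v : ι → V} (wt : ι → ℕ) (f : ι → V →ₗ[R] R)
    (hf : ∀ x y, wt y ≤ wt x → f y (v x) = if x = y then 1 else 0) : LinearIndependent R v := by
  refine linearIndependent_iff.2 fun l hl => ?_
  by_contra hne
  obtain ⟨y, hy, hmin⟩ := l.support.exists_min_image wt (Finsupp.support_nonempty_iff.2 hne)
  have hfy : f y (Finsupp.linearCombination R v l) = l y := by
    rw [Finsupp.linearCombination_apply, Finsupp.sum, map_sum,
      Finset.sum_eq_single_of_mem y hy fun x hx hxy => ?_]
    · simp [hf]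
    · simp [hf x y (hmin x hx), hxy]
  exact Finsupp.mem_support_iff.1 hy (by rw [← hfy, hl, map_zero])

variable {R : Type*} [CommRing R] (α β φ : R)

/-- Polynomials in one variable, the weight of `du`, over the extension of `R` by a root `r` of
`r² = α r + β`. -/
abbrev WeightRing : Type _ := (QuadraticAlgebra R β α)[X]

/-- The root `r` of `r² = α r + β`, as a constant polynomial. -/
noncomputable def root : WeightRing α β := Polynomial.C QuadraticAlgebra.omega

theorem root_mul_root :
    root α β * root α β = algebraMap R _ α * root α β + algebraMap R _ β := by
  have omega_mul_omega : (QuadraticAlgebra.omega : QuadraticAlgebra R β α) *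
      QuadraticAlgebra.omega = algebraMap R _ α * QuadraticAlgebra.omega + algebraMap R _ β := by
    ext <;> simp
  rw [root, ← Polynomial.C_mul, omega_mul_omega, Polynomial.C_add, Polynomial.C_mul]
  rfl

/-- The substitution `X ↦ (α - r) X + φ`. It is the effect on the weight of `du` of commuting it
past `d`. -/
noncomputable def twist : WeightRing α β →ₐ[QuadraticAlgebra R β α] WeightRing α β :=
  Polynomial.aeval ((algebraMap R _ α - root α β) * Polynomial.X + algebraMap R _ φ)

theorem twist_algebraMap (x : R) : twist α β φ (algebraMap R _ x) = algebraMap R _ x := by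
  rw [IsScalarTower.algebraMap_apply R (QuadraticAlgebra R β α) (WeightRing α β)]
  exact (twist α β φ).commutes _

theorem twist_root : twist α β φ (root α β) = root α β := (twist α β φ).commutes _

theorem twist_X :
    twist α β φ Polynomial.X = (algebraMap R _ α - root α β) * Polynomial.X + algebraMap R _ φ := by
  simp [twist]

/-- The polynomial `cᵢ` by which `d` acts from level `i` to level `i - 1` of the Verma module. -/
noncomputable def weight : ℕ → WeightRing α β
  | 0 => 0
  | i + 1 => root α β ^ i * Polynomial.X + twist α β φ (weight i)

theorem weight_zero : weight α β φ 0 = 0 := rfl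

theorem weight_succ (i : ℕ) :
    weight α β φ (i + 1) = root α β ^ i * Polynomial.X + twist α β φ (weight α β φ i) := rfl

theorem weight_one : weight α β φ 1 = Polynomial.X := by simp [weight]

theorem weight_add_two (i : ℕ) : weight α β φ (i + 2) = algebraMap R _ α * weight α β φ (i + 1) +
    algebraMap R _ β * weight α β φ i + algebraMap R _ φ := by
  induction i with
  | zero =>
    simp only [weight, map_zero, pow_zero, pow_one, twist_X, map_add, map_mul, map_one]
    ring
  | succ i ih =>
    have twist_ih := congrArg (twist α β φ) ih
    rw [map_add, map_add, map_mul, map_mul, twist_algebraMap, twist_algebraMap,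
      twist_algebraMap] at twist_ih
    linear_combination weight_succ α β φ (i + 2) + twist_ih
      - algebraMap R _ α * weight_succ α β φ (i + 1) - algebraMap R _ β * weight_succ α β φ i +
      root α β ^ i * Polynomial.X * root_mul_root α β

/-- The representation space on which the normal words act independently: a vector has a component
in the weight ring for each power `uⁱ` and each power `dᵏ`. -/
abbrev Verma : Type _ := ℕ → ℕ → WeightRing α β

/-- The action of `u` on `Verma α β`. -/
noncomputable def upOp : Module.End R (Verma α β) where
  toFun f
    | 0, _ => 0
    | i + 1, k => f i k
  map_add' f g := by
    funext i k
    cases i <;> simp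
  map_smul' c f := by
    funext i k
    cases i <;> simp

/-- The action of `d` on `Verma α β`. -/
noncomputable def downOp : Module.End R (Verma α β) where
  toFun f
    | i, 0 => weight α β φ (i + 1) * f (i + 1) 0
    | i, k + 1 => root α β ^ i * (twist α β φ).restrictScalars R (f i k) +
        weight α β φ (i + 1) * f (i + 1) (k + 1)
  map_add' f g := by
    funext i k
    cases k <;> simp <;> ring
  map_smul' c f := by
    funext i k
    cases k <;> simp

variable {α β}

@[simp]
theorem upOp_zero (f : Verma α β) (k : ℕ) : upOp α β f 0 k = 0 := rfl

@[simp]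
theorem upOp_succ (f : Verma α β) (i k : ℕ) : upOp α β f (i + 1) k = f i k := rfl

@[simp]
theorem downOp_zero (f : Verma α β) (i : ℕ) :
    downOp α β φ f i 0 = weight α β φ (i + 1) * f (i + 1) 0 := rfl

@[simp]
theorem downOp_succ (f : Verma α β) (i k : ℕ) : downOp α β φ f i (k + 1) =
    root α β ^ i * twist α β φ (f i k) + weight α β φ (i + 1) * f (i + 1) (k + 1) := rfl

variable (α β)

theorem downOp_upOp_upOp : downOp α β φ * upOp α β * upOp α β =
    α • (upOp α β * downOp α β φ * upOp α β) +
      β • (upOp α β * upOp α β * downOp α β φ) + φ • upOp α β := by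
  ext f i k : 3
  simp only [Module.End.mul_apply, LinearMap.add_apply, LinearMap.smul_apply, Pi.add_apply,
    Pi.smul_apply]
  simp only [Algebra.smul_def]
  rcases i with _ | _ | i <;> rcases k with _ | k <;>
    simp only [upOp_zero, upOp_succ, downOp_zero, downOp_succ, map_zero, mul_zero, zero_add,
      weight_add_two, weight_zero, add_zero]
  · ring
  · ring
  · ring
  · linear_combination (root α β ^ i * twist α β φ (f i k)) * root_mul_root α β

theorem downOp_downOp_upOp : downOp α β φ * downOp α β φ * upOp α β =
    α • (downOp α β φ * upOp α β * downOp α β φ) +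
      β • (upOp α β * downOp α β φ * downOp α β φ) + φ • downOp α β φ := by
  have twist_weight (i : ℕ) :
      twist α β φ (weight α β φ i) = weight α β φ (i + 1) - root α β ^ i * Polynomial.X := by
    rw [weight_succ, add_sub_cancel_left]
  ext f i k : 3
  simp only [Module.End.mul_apply, LinearMap.add_apply, LinearMap.smul_apply, Pi.add_apply,
    Pi.smul_apply]
  simp only [Algebra.smul_def]
  rcases i with _ | i <;> rcases k with _ | _ | k <;>
    simp only [upOp_zero, upOp_succ, downOp_zero, downOp_succ, map_zero, mul_zero, zero_add,
      add_zero, map_add, map_mul, map_pow, twist_root, twist_weight, pow_zero, one_mul] <;>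
    simp only [weight_add_two, weight_zero, zero_add, weight_one, mul_zero, add_zero]
  · ring
  · ring
  · ring
  · ring
  · linear_combination (root α β ^ i * (algebraMap R _ α * weight α β φ (i + 1) +
      algebraMap R _ β * weight α β φ i + algebraMap R _ φ - root α β ^ (i + 1) * Polynomial.X) *
      twist α β φ (f (i + 1) 0)) * root_mul_root α β
  · linear_combination (root α β ^ i * (algebraMap R _ α * weight α β φ (i + 1) +
      algebraMap R _ β * weight α β φ i + algebraMap R _ φ - root α β ^ (i + 1) * Polynomial.X) *
      twist α β φ (f (i + 1) (k + 1)) +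
      root α β ^ i * root α β ^ i * twist α β φ (twist α β φ (f i k))) * root_mul_root α β

theorem downUpRel_upOp_downOp : DownUpRel α β φ (upOp α β) (downOp α β φ) :=
  ⟨downOp_downOp_upOp α β φ, downOp_upOp_upOp α β φ⟩

/-- The cyclic vector of `Verma α β`, concentrated in position `(0, 0)`. -/
noncomputable def vacuum : Verma α β := fun i k => if i = 0 ∧ k = 0 then 1 else 0

theorem downOp_pow_vacuum (k i' k' : ℕ) : (downOp α β φ ^ k) (vacuum α β) i' k' =
    if i' = 0 ∧ k' = k then 1 else 0 := by
  induction k generalizing i' k' with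
  | zero => rfl
  | succ k ih =>
    rw [pow_succ', Module.End.mul_apply]
    cases k' with
    | zero => simp [ih]
    | succ k' =>
      by_cases hi : i' = 0 <;> by_cases hk : k' = k <;> simp [ih, hi, hk]

variable {α β}

theorem downOp_mul_upOp_pow_apply_zero (f : Verma α β) (j k : ℕ) :
    ((downOp α β φ * upOp α β) ^ j) f 0 k = Polynomial.X ^ j * f 0 k := by
  induction j with
  | zero => simp
  | succ j ih =>
    rw [pow_succ' Polynomial.X, mul_assoc, ← ih, pow_succ', Module.End.mul_apply,
      Module.End.mul_apply]
    cases k <;> simp [weight_one]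

theorem upOp_pow_apply (f : Verma α β) (i i' k : ℕ) :
    (upOp α β ^ i) f i' k = if i ≤ i' then f (i' - i) k else 0 := by
  induction i generalizing i' with
  | zero => simp
  | succ i ih =>
    rw [pow_succ', Module.End.mul_apply]
    cases i' <;> simp [ih]

variable (α β)

theorem normalWord_vacuum {i i' : ℕ} (hi : i' ≤ i) (j k k' : ℕ) :
    normalWord (upOp α β) (downOp α β φ) (i, j, k) (vacuum α β) i' k' =
      if i' = i ∧ k' = k then Polynomial.X ^ j else 0 := by
  simp only [normalWord, Module.End.mul_apply, upOp_pow_apply]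
  rcases hi.eq_or_lt with rfl | hlt
  · simp [downOp_mul_upOp_pow_apply_zero, downOp_pow_vacuum]
  · rw [if_neg (by omega), if_neg (by omega)]

theorem linearIndependent_normalWord_vacuum : LinearIndependent R fun x =>
    normalWord (upOp α β) (downOp α β φ) x (vacuum α β) := by
  let component (y : ℕ × ℕ × ℕ) : Verma α β →ₗ[R] R :=
    { toFun f := ((f y.1 y.2.2).coeff y.2.1).re
      map_add' _ _ := by simp
      map_smul' _ _ := by simp }
  refine linearIndependent_of_triangular Prod.fst component ?_
  rintro ⟨i, j, k⟩ ⟨i', j', k'⟩ (hi : i' ≤ i)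
  have hc : component (i', j', k') (normalWord (upOp α β) (downOp α β φ) (i, j, k) (vacuum α β)) =
      ((if i' = i ∧ k' = k then (Polynomial.X : WeightRing α β) ^ j else 0).coeff j').re :=
    congrArg (fun p => (p.coeff j').re) (normalWord_vacuum α β φ hi j k k')
  rw [hc]
  simp only [Prod.mk.injEq, eq_comm (a := i), eq_comm (a := j), eq_comm (a := k)]
  by_cases hik : i' = i ∧ k' = k
  · by_cases hj : j' = j
    · rw [if_pos hik, if_pos ⟨hik.1, hj, hik.2⟩, hj, Polynomial.coeff_X_pow_self,
        QuadraticAlgebra.re_one]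
    · simp [hik, hj, Polynomial.coeff_X_pow]
  · rw [if_neg hik, if_neg (by tauto), Polynomial.coeff_zero, QuadraticAlgebra.re_zero]

end Independence

section Basis

variable {R A : Type u} [CommRing R] [Ring A] [Algebra R A] {α β φ : R} {u d : A}

/-- The `R`-algebra `A` is generated by `u` and `d` subject only to the down-up relations: every
other solution of these relations in an `R`-algebra is the image of `u`, `d`. -/
structure IsDownUpAlgebra (α β φ : R) (u d : A) : Prop extends DownUpRel α β φ u d where
  adjoin_eq_top : Algebra.adjoin R {u, d} = ⊤
  exists_lift : ∀ (B : Type u) [Ring B] [Algebra R B] (x y : B), DownUpRel α β φ x y →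
    ∃ f : A →ₐ[R] B, f u = x ∧ f d = y

namespace IsDownUpAlgebra

theorem linearIndependent_normalWord (h : IsDownUpAlgebra α β φ u d) :
    LinearIndependent R (normalWord u d) := by
  obtain ⟨f, hu, hd⟩ := h.exists_lift _ _ _ (downUpRel_upOp_downOp α β φ)
  refine LinearIndependent.of_comp ((LinearMap.applyₗ (vacuum α β)).comp f.toLinearMap) ?_
  convert linearIndependent_normalWord_vacuum α β φ using 1
  funext x
  have hf : f (normalWord u d x) = normalWord (upOp α β) (downOp α β φ) x := by
    simp only [normalWord, map_mul, map_pow, hu, hd]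
  exact congrArg (· (vacuum α β)) hf

/-- The basis of normal words. -/
noncomputable def basis (h : IsDownUpAlgebra α β φ u d) : Module.Basis (ℕ × ℕ × ℕ) R A :=
  Module.Basis.mk h.linearIndependent_normalWord (h.span_range_normalWord h.adjoin_eq_top).ge

theorem basis_apply (h : IsDownUpAlgebra α β φ u d) (x : ℕ × ℕ × ℕ) :
    h.basis x = normalWord u d x :=
  Module.Basis.mk_apply _ _ x

theorem isExhaustiveFiltration (h : IsDownUpAlgebra α β φ u d) :
    IsExhaustiveFiltration (lengthFiltration R u d) :=
  isExhaustiveFiltration_spanFiltration (h.span_range_normalWord h.adjoin_eq_top)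

end IsDownUpAlgebra

end Basis

/-! ### Stripping letters from normal words -/

open LinearMap (mulRight)

section StrippingSystem

variable {R Z : Type*} [CommRing R] [AddCommGroup Z] [Module R Z]

/-- `U` and `D` act on the filtered module `Z` like the right multiplications by `u` and `d` on a
down-up algebra, and `stripU`, `stripD`, `stripDU`, `stripDD` like operators that strip the
indicated letters from the end of a normal word. -/
structure IsStrippingSystem (α β φ : R) (F : ℤ → Submodule R Z)
    (U D stripU stripD stripDU stripDD : Module.End R Z) : Prop where
  U_mem : U ∈ orderLE F 1
  D_mem : D ∈ orderLE F 1
  stripU_mem : stripU ∈ orderLE F (-1)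
  stripD_mem : stripD ∈ orderLE F (-1)
  stripDU_mem : stripDU ∈ orderLE F (-2)
  stripDD_mem : stripDD ∈ orderLE F (-2)
  stripU_mul_D : stripU * D = 0
  stripD_mul_D : stripD * D = 1
  stripDU_mul_D : stripDU * D = 0
  stripDD_mul_D : stripDD * D = stripD
  stripDU_mul_UD : stripDU * (U * D) + D * stripD = 1
  stripDD_mul_UD : stripDD * (U * D) =
    α • (stripD * U) + β • (U * stripD) + φ • (stripD * stripD)
  stripU_mul_U : stripU * U + D * D * stripDD + U * D * stripDU =
    1 + α • (D * U * stripDU) + φ • (stripU * U * stripDU)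
  stripD_mul_U : stripD * U = (α • (U * D) + β • (D * U)) * stripDD
    + β • (U * U * stripDU) + φ • (stripDD + stripD * U * stripDU)

theorem IsStrippingSystem.rTensor {α β φ : R} {F : ℤ → Submodule R Z}
    {U D S P T T' : Module.End R Z} (h : IsStrippingSystem α β φ F U D S P T T')
    (M : Type*) [AddCommGroup M] [Module R M] :
    IsStrippingSystem α β φ (tensorFiltration M F) (Module.End.rTensorAlgHom R Z M U)
      (Module.End.rTensorAlgHom R Z M D) (Module.End.rTensorAlgHom R Z M S)
      (Module.End.rTensorAlgHom R Z M P) (Module.End.rTensorAlgHom R Z M T)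
      (Module.End.rTensorAlgHom R Z M T') where
  U_mem := rTensor_mem_orderLE h.U_mem
  D_mem := rTensor_mem_orderLE h.D_mem
  stripU_mem := rTensor_mem_orderLE h.stripU_mem
  stripD_mem := rTensor_mem_orderLE h.stripD_mem
  stripDU_mem := rTensor_mem_orderLE h.stripDU_mem
  stripDD_mem := rTensor_mem_orderLE h.stripDD_mem
  stripU_mul_D := by
    simpa only [map_add, map_mul, map_smul, map_one, map_zero] using
      congrArg (Module.End.rTensorAlgHom R Z M) h.stripU_mul_D
  stripD_mul_D := by
    simpa only [map_add, map_mul, map_smul, map_one, map_zero] using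
      congrArg (Module.End.rTensorAlgHom R Z M) h.stripD_mul_D
  stripDU_mul_D := by
    simpa only [map_add, map_mul, map_smul, map_one, map_zero] using
      congrArg (Module.End.rTensorAlgHom R Z M) h.stripDU_mul_D
  stripDD_mul_D := by
    simpa only [map_add, map_mul, map_smul, map_one, map_zero] using
      congrArg (Module.End.rTensorAlgHom R Z M) h.stripDD_mul_D
  stripDU_mul_UD := by
    simpa only [map_add, map_mul, map_smul, map_one, map_zero] using
      congrArg (Module.End.rTensorAlgHom R Z M) h.stripDU_mul_UD
  stripDD_mul_UD := by
    simpa only [map_add, map_mul, map_smul, map_one, map_zero] using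
      congrArg (Module.End.rTensorAlgHom R Z M) h.stripDD_mul_UD
  stripU_mul_U := by
    simpa only [map_add, map_mul, map_smul, map_one, map_zero] using
      congrArg (Module.End.rTensorAlgHom R Z M) h.stripU_mul_U
  stripD_mul_U := by
    simpa only [map_add, map_mul, map_smul, map_one, map_zero] using
      congrArg (Module.End.rTensorAlgHom R Z M) h.stripD_mul_U

end StrippingSystem

section StrippingOperators

variable {R A : Type u} [CommRing R] [Ring A] [Algebra R A] {α β φ : R} {u d : A}

namespace IsDownUpAlgebra

variable (h : IsDownUpAlgebra α β φ u d)

/-- Strips a trailing `d` from a normal word, and kills the words without one. -/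
noncomputable def stripD : Module.End R A :=
  h.basis.constr R fun
    | (i, j, k + 1) => normalWord u d (i, j, k)
    | (_, _, 0) => 0

/-- Strips a trailing `u` from a normal word, and kills the words without one. -/
noncomputable def stripU : Module.End R A :=
  h.basis.constr R fun
    | (i + 1, 0, 0) => normalWord u d (i, 0, 0)
    | (i, j + 1, 0) => normalWord u d (i, j, 1)
    | _ => 0

/-- Strips a trailing `du` from a normal word, and kills the words without one. -/
noncomputable def stripDU : Module.End R A :=
  h.basis.constr R fun
    | (i, j + 1, 0) => normalWord u d (i, j, 0)
    | _ => 0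

/-- Strips a trailing `dd`. The correction term on the words ending in `du` makes
`(stripDD, stripDU)` a homotopy for the leading part of the second differential. -/
noncomputable def stripDD : Module.End R A :=
  h.stripD * h.stripD + α • (h.stripD * mulRight R u * h.stripDU)

theorem stripDD_apply (a : A) :
    h.stripDD a = h.stripD (h.stripD a) + α • h.stripD (h.stripDU a * u) := rfl

section NormalWord

variable (i j k : ℕ)

theorem stripD_normalWord_succ :
    h.stripD (normalWord u d (i, j, k + 1)) = normalWord u d (i, j, k) := by
  rw [stripD, ← h.basis_apply, Module.Basis.constr_basis]

theorem stripD_normalWord_zero : h.stripD (normalWord u d (i, j, 0)) = 0 := by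
  rw [stripD, ← h.basis_apply, Module.Basis.constr_basis]

theorem stripU_normalWord_succ : h.stripU (normalWord u d (i, j, k + 1)) = 0 := by
  rw [stripU, ← h.basis_apply, Module.Basis.constr_basis]
  cases i <;> cases j <;> rfl

theorem stripU_normalWord_succ_zero :
    h.stripU (normalWord u d (i, j + 1, 0)) = normalWord u d (i, j, 1) := by
  rw [stripU, ← h.basis_apply, Module.Basis.constr_basis]
  cases i <;> rfl

theorem stripU_normalWord_succ_zero_zero :
    h.stripU (normalWord u d (i + 1, 0, 0)) = normalWord u d (i, 0, 0) := by
  rw [stripU, ← h.basis_apply, Module.Basis.constr_basis]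
  cases i <;> rfl

theorem stripU_normalWord_zero : h.stripU (normalWord u d (0, 0, 0)) = 0 := by
  rw [stripU, ← h.basis_apply, Module.Basis.constr_basis]

theorem stripDU_normalWord_succ : h.stripDU (normalWord u d (i, j, k + 1)) = 0 := by
  rw [stripDU, ← h.basis_apply, Module.Basis.constr_basis]
  cases i <;> cases j <;> rfl

theorem stripDU_normalWord_succ_zero :
    h.stripDU (normalWord u d (i, j + 1, 0)) = normalWord u d (i, j, 0) := by
  rw [stripDU, ← h.basis_apply, Module.Basis.constr_basis]
  cases i <;> rfl

theorem stripDU_normalWord_zero_zero : h.stripDU (normalWord u d (i, 0, 0)) = 0 := by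
  rw [stripDU, ← h.basis_apply, Module.Basis.constr_basis]

end NormalWord

theorem stripD_mem_orderLE : h.stripD ∈ orderLE (lengthFiltration R u d) (-1) := by
  refine mem_orderLE_spanFiltration fun ⟨i, j, k⟩ => ?_
  rcases k with _ | k
  · exact h.stripD_normalWord_zero i j ▸ zero_mem _
  · rw [stripD_normalWord_succ]
    exact normalWord_mem_lengthFiltration R u d (by simp [wordLength])

theorem stripU_mem_orderLE : h.stripU ∈ orderLE (lengthFiltration R u d) (-1) := by
  refine mem_orderLE_spanFiltration fun ⟨i, j, k⟩ => ?_
  rcases k with _ | k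
  · rcases j with _ | j
    · rcases i with _ | i
      · exact h.stripU_normalWord_zero ▸ zero_mem _
      · rw [stripU_normalWord_succ_zero_zero]
        exact normalWord_mem_lengthFiltration R u d (by simp [wordLength])
    · rw [stripU_normalWord_succ_zero]
      exact normalWord_mem_lengthFiltration R u d (by simp [wordLength]; omega)
  · exact h.stripU_normalWord_succ i j k ▸ zero_mem _

theorem stripDU_mem_orderLE : h.stripDU ∈ orderLE (lengthFiltration R u d) (-2) := by
  refine mem_orderLE_spanFiltration fun ⟨i, j, k⟩ => ?_
  rcases k with _ | k
  · rcases j with _ | j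
    · exact h.stripDU_normalWord_zero_zero i ▸ zero_mem _
    · rw [stripDU_normalWord_succ_zero]
      exact normalWord_mem_lengthFiltration R u d (by simp [wordLength]; omega)
  · exact h.stripDU_normalWord_succ i j k ▸ zero_mem _

include h in
theorem mulRight_u_mem_orderLE : mulRight R u ∈ orderLE (lengthFiltration R u d) 1 :=
  h.mulRight_mem_orderLE (by
    simpa [normalWord] using
      normalWord_mem_lengthFiltration R u d (i := 1) (j := 0) (k := 0) (by simp))

include h in
theorem mulRight_d_mem_orderLE : mulRight R d ∈ orderLE (lengthFiltration R u d) 1 :=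
  h.mulRight_mem_orderLE (by
    simpa [normalWord] using
      normalWord_mem_lengthFiltration R u d (i := 0) (j := 0) (k := 1) (by simp))

theorem stripDD_mem_orderLE : h.stripDD ∈ orderLE (lengthFiltration R u d) (-2) := by
  have hDD := mul_mem_orderLE h.stripD_mem_orderLE h.stripD_mem_orderLE
  have hDU := mul_mem_orderLE (mul_mem_orderLE h.stripD_mem_orderLE h.mulRight_u_mem_orderLE)
    h.stripDU_mem_orderLE
  norm_num only at hDD hDU
  exact add_mem hDD (smul_mem _ α hDU)

section Ext

variable {X : Type*} [AddCommGroup X] [Module R X] {f g : A →ₗ[R] X}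

include h in
theorem hom_ext_normalWord (hword : ∀ x, f (normalWord u d x) = g (normalWord u d x)) : f = g :=
  h.basis.ext fun x => by rw [h.basis_apply, hword]

include h in
theorem hom_ext_mul_d (hword : ∀ i j, f (normalWord u d (i, j, 0)) = g (normalWord u d (i, j, 0)))
    (hd : ∀ a, f (a * d) = g (a * d)) : f = g :=
  h.hom_ext_normalWord fun ⟨i, j, k⟩ => by
    cases k with
    | zero => exact hword i j
    | succ k => exact normalWord_mul_d u d i j k ▸ hd _

include h in
theorem hom_ext_mul_du (hword : ∀ i, f (normalWord u d (i, 0, 0)) = g (normalWord u d (i, 0, 0)))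
    (hdu : ∀ a, f (a * d * u) = g (a * d * u)) (hd : ∀ a, f (a * d) = g (a * d)) : f = g :=
  h.hom_ext_mul_d (fun i j => by
    cases j with
    | zero => exact hword i
    | succ j => exact normalWord_mul_d_mul_u u d i j ▸ hdu _) hd

end Ext

@[simp]
theorem stripD_mul_d (a : A) : h.stripD (a * d) = a := by
  have : h.stripD * mulRight R d = 1 := h.hom_ext_normalWord fun ⟨i, j, k⟩ => by
    simp [normalWord_mul_d, stripD_normalWord_succ]
  exact LinearMap.congr_fun this a

@[simp]
theorem stripU_mul_d (a : A) : h.stripU (a * d) = 0 := by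
  have : h.stripU * mulRight R d = 0 := h.hom_ext_normalWord fun ⟨i, j, k⟩ => by
    simp [normalWord_mul_d, stripU_normalWord_succ]
  exact LinearMap.congr_fun this a

@[simp]
theorem stripDU_mul_d (a : A) : h.stripDU (a * d) = 0 := by
  have : h.stripDU * mulRight R d = 0 := h.hom_ext_normalWord fun ⟨i, j, k⟩ => by
    simp [normalWord_mul_d, stripDU_normalWord_succ]
  exact LinearMap.congr_fun this a

@[simp]
theorem stripDD_mul_d (a : A) : h.stripDD (a * d) = h.stripD a := by
  simp [stripDD_apply]

@[simp]
theorem stripU_mul_d_mul_u (a : A) : h.stripU (a * d * u) = a * d - h.stripD a * d * d := by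
  have : h.stripU * mulRight R u * mulRight R d =
      mulRight R d - mulRight R d * mulRight R d * h.stripD := by
    refine h.hom_ext_mul_d (fun i j => ?_) fun a => ?_
    · simp [normalWord_mul_d_mul_u, stripU_normalWord_succ_zero, stripD_normalWord_zero,
        ← normalWord_mul_d]
    · simp [h.mul_ddu]
  exact LinearMap.congr_fun this a

@[simp]
theorem stripD_mul_d_mul_u (a : A) : h.stripD (a * d * u) =
    α • (h.stripD a * d * u) + β • (h.stripD a * u * d) + φ • h.stripD a := by
  have : h.stripD * mulRight R u * mulRight R d =
      α • (mulRight R u * mulRight R d * h.stripD) +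
        β • (mulRight R d * mulRight R u * h.stripD) + φ • h.stripD := by
    refine h.hom_ext_mul_d (fun i j => ?_) fun a => ?_
    · simp [normalWord_mul_d_mul_u, stripD_normalWord_zero]
    · simp [h.mul_ddu]
  exact LinearMap.congr_fun this a

@[simp]
theorem stripDU_mul_d_mul_u (a : A) : h.stripDU (a * d * u) = a - h.stripD a * d := by
  have : h.stripDU * mulRight R u * mulRight R d = 1 - mulRight R d * h.stripD := by
    refine h.hom_ext_mul_d (fun i j => ?_) fun a => ?_
    · simp [normalWord_mul_d_mul_u, stripDU_normalWord_succ_zero, stripD_normalWord_zero]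
    · simp [h.mul_ddu]
  exact LinearMap.congr_fun this a

@[simp]
theorem stripDD_mul_d_mul_u (a : A) : h.stripDD (a * d * u) =
    α • h.stripD (a * u) + β • (h.stripD a * u) + φ • h.stripD (h.stripD a) := by
  simp only [stripDD_apply, stripDU_mul_d_mul_u, stripD_mul_d_mul_u, sub_mul, map_add, map_sub,
    map_smul, stripD_mul_d]
  module

theorem stripU_mul_mulRight_u : h.stripU * mulRight R u + mulRight R d * mulRight R d * h.stripDD
      + mulRight R u * mulRight R d * h.stripDU =
    1 + α • (mulRight R d * mulRight R u * h.stripDU) +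
      φ • (h.stripU * mulRight R u * h.stripDU) := by
  refine h.hom_ext_mul_du (fun i => ?_) (fun a => ?_) fun a => ?_
  · simp [normalWord_mul_u, stripU_normalWord_succ_zero_zero, stripDD_apply,
      stripD_normalWord_zero, stripDU_normalWord_zero_zero]
  · simp only [LinearMap.add_apply, LinearMap.smul_apply, Module.End.mul_apply,
      Module.End.one_apply, LinearMap.mulRight_apply, h.mul_duu, h.mul_ddu, stripU_mul_d_mul_u,
      stripU_mul_d, stripDD_mul_d_mul_u, stripDU_mul_d_mul_u, map_add, map_sub, map_smul,
      smul_zero, add_zero]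
    module
  · simp

theorem stripD_mul_mulRight_u : h.stripD * mulRight R u =
    (α • (mulRight R u * mulRight R d) + β • (mulRight R d * mulRight R u)) * h.stripDD
      + β • (mulRight R u * mulRight R u * h.stripDU)
      + φ • (h.stripDD + h.stripD * mulRight R u * h.stripDU) := by
  refine h.hom_ext_mul_du (fun i => ?_) (fun a => ?_) fun a => ?_
  · simp [normalWord_mul_u, stripDD_apply, stripD_normalWord_zero, stripDU_normalWord_zero_zero]
  · simp only [LinearMap.add_apply, LinearMap.smul_apply, Module.End.mul_apply,
      LinearMap.mulRight_apply, h.mul_duu, stripD_mul_d_mul_u, stripD_mul_d, stripDD_mul_d_mul_u,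
      stripDU_mul_d_mul_u, map_add, map_sub, map_smul, smul_add, add_mul,
      smul_mul_assoc]
    module
  · simp

theorem isStrippingSystem : IsStrippingSystem α β φ (lengthFiltration R u d) (mulRight R u)
    (mulRight R d) h.stripU h.stripD h.stripDU h.stripDD where
  U_mem := h.mulRight_u_mem_orderLE
  D_mem := h.mulRight_d_mem_orderLE
  stripU_mem := h.stripU_mem_orderLE
  stripD_mem := h.stripD_mem_orderLE
  stripDU_mem := h.stripDU_mem_orderLE
  stripDD_mem := h.stripDD_mem_orderLE
  stripU_mul_D := LinearMap.ext h.stripU_mul_d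
  stripD_mul_D := LinearMap.ext h.stripD_mul_d
  stripDU_mul_D := LinearMap.ext h.stripDU_mul_d
  stripDD_mul_D := LinearMap.ext h.stripDD_mul_d
  stripDU_mul_UD := LinearMap.ext fun a => by simp
  stripDD_mul_UD := LinearMap.ext h.stripDD_mul_d_mul_u
  stripU_mul_U := h.stripU_mul_mulRight_u
  stripD_mul_U := h.stripD_mul_mulRight_u

end IsDownUpAlgebra

end StrippingOperators

/-! ### The differentials and their approximate homotopies -/

section Differentials

section FoxDerivatives

variable {R E : Type*} [CommRing R] [Ring E] [Module R E] (α β φ : R)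

/-- The Fox derivative with respect to `u` of the relation `d²u = α dud + β ud² + φd`: each
occurrence of `u` in a word is deleted, the letters before it become the right multiplications `U`
and `D` (in reversed order) and the letters after it the left actions `lu` and `ld`. -/
def dduFoxU (D ld : E) : E :=
  D * D - α • (D * ld) - β • (ld * ld)

/-- The Fox derivative with respect to `d` of the relation `d²u = α dud + β ud² + φd`. -/
def dduFoxD (U D lu ld : E) : E :=
  ld * lu + D * lu - α • (lu * ld + U * D) - β • (U * ld + D * U) - φ • 1

/-- The Fox derivative with respect to `u` of the relation `du² = α udu + β u²d + φu`. -/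
def duuFoxU (U D lu ld : E) : E :=
  D * lu + U * D - α • (ld * lu + D * U) - β • (lu * ld + U * ld) - φ • 1

/-- The Fox derivative with respect to `d` of the relation `du² = α udu + β u²d + φu`. -/
def duuFoxD (U lu : E) : E :=
  lu * lu - α • (U * lu) - β • (U * U)

end FoxDerivatives

variable {R B Z : Type*} [CommRing R] [Ring B] [AddCommGroup Z] [Module R Z] [Module B Z]

/-- The first differential; the summands correspond to the generators `u` and `d`. -/
def diff₁ (U D lu ld : Module.End B Z) : Z × Z →ₗ[B] Z :=
  (U - lu).coprod (D - ld)

variable [SMulCommClass B R Z] (α β φ : R) (U D lu ld : Module.End B Z)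

/-- The second differential; the summands of its domain correspond to the defining relations. -/
def diff₂ : Z × Z →ₗ[B] Z × Z :=
  ((dduFoxU α β D ld).coprod (duuFoxU α β φ U D lu ld)).prod
    ((dduFoxD α β φ U D lu ld).coprod (duuFoxD α β U lu))

/-- The third differential; it records the overlap `d²u²` of the two defining relations. -/
def diff₃ : Z →ₗ[B] Z × Z :=
  (-lu - β • U).prod (D + β • ld)

end Differentials

section Homotopy

variable {R Z : Type*} [CommRing R] [AddCommGroup Z] [Module R Z] {α β φ : R}
  {F : ℤ → Submodule R Z} {U D S P Q Q' lu ld : Module.End R Z}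

section LeadingTerms

variable (α β φ) (hF : IsExhaustiveFiltration F)
  (hlu : lu ∈ orderLE F 0) (hld : ld ∈ orderLE F 0)

include hF hld in
theorem dduFoxU_sub_mem_orderLE (hD : D ∈ orderLE F 1) :
    dduFoxU α β D ld - D * D ∈ orderLE F 1 := by
  have hDl : D * ld ∈ orderLE F 1 := hF.mul_mem_orderLE hD hld (by norm_num)
  have hll : ld * ld ∈ orderLE F 1 := hF.mul_mem_orderLE hld hld (by norm_num)
  convert add_mem (smul_mem _ (-α) hDl) (smul_mem _ (-β) hll) using 1
  rw [dduFoxU]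
  module

include hF hlu in
theorem duuFoxD_sub_mem_orderLE (hU : U ∈ orderLE F 1) :
    duuFoxD α β U lu - -(β • (U * U)) ∈ orderLE F 1 := by
  have hUl : U * lu ∈ orderLE F 1 := hF.mul_mem_orderLE hU hlu (by norm_num)
  have hll : lu * lu ∈ orderLE F 1 := hF.mul_mem_orderLE hlu hlu (by norm_num)
  convert add_mem hll (smul_mem _ (-α) hUl) using 1
  rw [duuFoxD]
  module

include hF hlu hld

theorem duuFoxU_sub_mem_orderLE (hU : U ∈ orderLE F 1) (hD : D ∈ orderLE F 1) :
    duuFoxU α β φ U D lu ld - (U * D - α • (D * U)) ∈ orderLE F 1 := by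
  have hDl : D * lu ∈ orderLE F 1 := hF.mul_mem_orderLE hD hlu (by norm_num)
  have hUl : U * ld ∈ orderLE F 1 := hF.mul_mem_orderLE hU hld (by norm_num)
  have hdu : ld * lu ∈ orderLE F 1 := hF.mul_mem_orderLE hld hlu (by norm_num)
  have hud : lu * ld ∈ orderLE F 1 := hF.mul_mem_orderLE hlu hld (by norm_num)
  have hone := hF.orderLE_mono zero_le_one one_mem_orderLE
  convert add_mem (add_mem (add_mem hDl (smul_mem _ (-α) hdu))
    (smul_mem _ (-β) (add_mem hud hUl))) (smul_mem _ (-φ) hone) using 1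
  rw [duuFoxU]
  module

theorem dduFoxD_sub_mem_orderLE (hU : U ∈ orderLE F 1) (hD : D ∈ orderLE F 1) :
    dduFoxD α β φ U D lu ld - -(α • (U * D) + β • (D * U)) ∈ orderLE F 1 := by
  have hDl : D * lu ∈ orderLE F 1 := hF.mul_mem_orderLE hD hlu (by norm_num)
  have hUl : U * ld ∈ orderLE F 1 := hF.mul_mem_orderLE hU hld (by norm_num)
  have hdu : ld * lu ∈ orderLE F 1 := hF.mul_mem_orderLE hld hlu (by norm_num)
  have hud : lu * ld ∈ orderLE F 1 := hF.mul_mem_orderLE hlu hld (by norm_num)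
  have hone := hF.orderLE_mono zero_le_one one_mem_orderLE
  convert add_mem (add_mem (add_mem (add_mem hdu hDl) (smul_mem _ (-α) hud))
    (smul_mem _ (-β) hUl)) (smul_mem _ (-φ) hone) using 1
  rw [dduFoxD]
  module

end LeadingTerms

namespace IsStrippingSystem

variable (hS : IsStrippingSystem α β φ F U D S P Q Q') (hF : IsExhaustiveFiltration F)

include hS hF

section

variable {T : Module.End R Z}

theorem mul_stripDD_mem (hT : T ∈ orderLE F 1) : T * Q' ∈ orderLE F (-1) :=
  hF.mul_mem_orderLE hT hS.stripDD_mem (by norm_num)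

theorem mul_stripDU_mem (hT : T ∈ orderLE F 1) : T * Q ∈ orderLE F (-1) :=
  hF.mul_mem_orderLE hT hS.stripDU_mem (by norm_num)

theorem stripDD_mul_mem (hT : T ∈ orderLE F 1) : Q' * T ∈ orderLE F (-1) :=
  hF.mul_mem_orderLE hS.stripDD_mem hT (by norm_num)

theorem stripDU_mul_mem (hT : T ∈ orderLE F 1) : Q * T ∈ orderLE F (-1) :=
  hF.mul_mem_orderLE hS.stripDU_mem hT (by norm_num)

theorem stripU_mul_mem (hT : T ∈ orderLE F 0) : S * T ∈ orderLE F (-1) :=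
  hF.mul_mem_orderLE hS.stripU_mem hT (by norm_num)

theorem stripD_mul_mem (hT : T ∈ orderLE F 0) : P * T ∈ orderLE F (-1) :=
  hF.mul_mem_orderLE hS.stripD_mem hT (by norm_num)

theorem mul_stripD_mem (hT : T ∈ orderLE F 0) : T * P ∈ orderLE F (-1) :=
  hF.mul_mem_orderLE hT hS.stripD_mem (by norm_num)

end

variable (hlu : lu ∈ orderLE F 0) (hld : ld ∈ orderLE F 0)

include hld in
theorem one_sub_stripD_mul_mem : 1 - P * (D + β • ld) ∈ orderLE F (-1) := by
  convert smul_mem _ (-β) (hS.stripD_mul_mem hF hld) using 1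
  rw [mul_add, hS.stripD_mul_D, mul_smul_comm]
  module

include hld in
theorem approxRetraction₃ (n : ℤ) (z : Z) (hz : z ∈ F n) :
    z - P (diff₃ β U D lu ld z).2 ∈ F (n - 1) :=
  hS.one_sub_stripD_mul_mem hF hld n z hz

include hlu hld

theorem approxHomotopy₁_fst :
    1 - dduFoxU α β D ld * Q' - duuFoxU α β φ U D lu ld * Q - S * (U - lu) ∈
      orderLE F (-1) := by
  have hSU : S * U ∈ orderLE F 1 := hF.mul_mem_orderLE hS.stripU_mem hS.U_mem (by norm_num)
  convert sub_mem (sub_mem (sub_mem (hS.stripU_mul_mem hF hlu)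
    (hS.mul_stripDD_mem hF (dduFoxU_sub_mem_orderLE α β hF hld hS.D_mem)))
    (hS.mul_stripDU_mem hF (duuFoxU_sub_mem_orderLE α β φ hF hlu hld hS.U_mem hS.D_mem)))
    (smul_mem _ φ (hS.mul_stripDU_mem hF hSU)) using 1
  simp only [sub_mul, mul_sub, smul_mul_assoc]
  linear_combination (norm := module) -hS.stripU_mul_U

theorem approxHomotopy₁_snd :
    dduFoxD α β φ U D lu ld * Q' + duuFoxD α β U lu * Q + P * (U - lu) ∈ orderLE F (-1) := by
  have hPU : P * U ∈ orderLE F 1 := hF.mul_mem_orderLE hS.stripD_mem hS.U_mem (by norm_num)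
  have hQ' : Q' ∈ orderLE F (-1) := hF.orderLE_mono (by norm_num) hS.stripDD_mem
  convert add_mem (sub_mem (add_mem
    (hS.mul_stripDD_mem hF (dduFoxD_sub_mem_orderLE α β φ hF hlu hld hS.U_mem hS.D_mem))
    (hS.mul_stripDU_mem hF (duuFoxD_sub_mem_orderLE α β hF hlu hS.U_mem)))
    (hS.stripD_mul_mem hF hlu))
    (smul_mem _ φ (add_mem hQ' (hS.mul_stripDU_mem hF hPU))) using 1
  simp only [sub_mul, mul_sub, neg_mul, smul_mul_assoc]
  linear_combination (norm := module) hS.stripD_mul_U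

theorem approxHomotopy₁ (n : ℤ) (y : Z × Z) (hy : y ∈ (F n).prod (F n)) :
    y - diff₂ α β φ U D lu ld (Q' y.1, Q y.1)
      - (S (diff₁ U D lu ld y), P (diff₁ U D lu ld y)) ∈ (F (n - 1)).prod (F (n - 1)) := by
  have hSd : S * (D - ld) ∈ orderLE F (-1) := by
    rw [mul_sub, hS.stripU_mul_D, zero_sub]
    exact neg_mem (hS.stripU_mul_mem hF hld)
  have hPd : 1 - P * (D - ld) ∈ orderLE F (-1) := by
    rw [mul_sub, hS.stripD_mul_D, sub_sub_cancel]
    exact hS.stripD_mul_mem hF hld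
  refine ⟨(?_ : _ ∈ F (n + -1)), (?_ : _ ∈ F (n + -1))⟩
  · convert sub_mem (hS.approxHomotopy₁_fst hF hlu hld n y.1 hy.1) (hSd n y.2 hy.2) using 1
    simp only [diff₁, diff₂, LinearMap.prod_apply, Function.prod_apply, LinearMap.coprod_apply,
      LinearMap.sub_apply, map_add, map_sub, Prod.fst_sub, Module.End.one_apply,
      Module.End.mul_apply]
    module
  · convert sub_mem (hPd n y.2 hy.2) (hS.approxHomotopy₁_snd hF hlu hld n y.1 hy.1) using 1
    simp only [diff₁, diff₂, LinearMap.prod_apply, Function.prod_apply, LinearMap.coprod_apply,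
      LinearMap.sub_apply, LinearMap.add_apply, map_add, map_sub, Prod.snd_sub,
      Module.End.one_apply, Module.End.mul_apply]
    module

theorem approxHomotopy₂_fst :
    (lu + β • U) * P - Q' * duuFoxU α β φ U D lu ld ∈ orderLE F (-1) := by
  have hP : P ∈ orderLE F 0 := hF.orderLE_mono (by norm_num) hS.stripD_mem
  convert sub_mem (sub_mem (hS.mul_stripD_mem hF hlu)
    (hS.stripDD_mul_mem hF (duuFoxU_sub_mem_orderLE α β φ hF hlu hld hS.U_mem hS.D_mem)))
    (smul_mem _ φ (hS.mul_stripD_mem hF hP)) using 1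
  have hDU : Q' * (D * U) = P * U := by rw [← mul_assoc, hS.stripDD_mul_D]
  simp only [add_mul, mul_sub, mul_smul_comm, smul_mul_assoc]
  linear_combination (norm := module) -hS.stripDD_mul_UD + α • hDU

theorem approxHomotopy₂_snd :
    1 - (D + β • ld) * P - Q * duuFoxU α β φ U D lu ld ∈ orderLE F (-1) := by
  convert sub_mem (smul_mem _ (-β) (hS.mul_stripD_mem hF hld))
    (hS.stripDU_mul_mem hF (duuFoxU_sub_mem_orderLE α β φ hF hlu hld hS.U_mem hS.D_mem)) using 1
  have hDU : Q * (D * U) = 0 := by rw [← mul_assoc, hS.stripDU_mul_D, zero_mul]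
  simp only [add_mul, mul_sub, mul_smul_comm, smul_mul_assoc]
  linear_combination (norm := module) -hS.stripDU_mul_UD + α • hDU

theorem approxHomotopy₂ (n : ℤ) (y : Z × Z) (hy : y ∈ (F n).prod (F n)) :
    y - diff₃ β U D lu ld (P y.2)
      - (Q' (diff₂ α β φ U D lu ld y).1, Q (diff₂ α β φ U D lu ld y).1) ∈
        (F (n - 1)).prod (F (n - 1)) := by
  have hFox := dduFoxU_sub_mem_orderLE α β hF hld hS.D_mem
  have hQ' : 1 - Q' * dduFoxU α β D ld ∈ orderLE F (-1) := by
    convert neg_mem (hS.stripDD_mul_mem hF hFox) using 1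
    rw [mul_sub, ← mul_assoc, hS.stripDD_mul_D, hS.stripD_mul_D, neg_sub]
  have hQ : Q * dduFoxU α β D ld ∈ orderLE F (-1) := by
    convert hS.stripDU_mul_mem hF hFox using 1
    rw [mul_sub, ← mul_assoc, hS.stripDU_mul_D, zero_mul, sub_zero]
  refine ⟨(?_ : _ ∈ F (n + -1)), (?_ : _ ∈ F (n + -1))⟩
  · convert add_mem (hQ' n y.1 hy.1) (hS.approxHomotopy₂_fst hF hlu hld n y.2 hy.2) using 1
    simp only [diff₂, diff₃, LinearMap.prod_apply, Function.prod_apply, LinearMap.coprod_apply,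
      LinearMap.sub_apply, LinearMap.neg_apply, LinearMap.smul_apply, LinearMap.add_apply, map_add,
      Prod.fst_sub, Module.End.one_apply, Module.End.mul_apply]
    module
  · convert sub_mem (hS.approxHomotopy₂_snd hF hlu hld n y.2 hy.2) (hQ n y.1 hy.1) using 1
    simp only [diff₂, diff₃, LinearMap.prod_apply, Function.prod_apply, LinearMap.coprod_apply,
      LinearMap.sub_apply, LinearMap.neg_apply, LinearMap.smul_apply, LinearMap.add_apply, map_add,
      Prod.snd_sub, Module.End.one_apply, Module.End.mul_apply]
    module

end IsStrippingSystem

end Homotopy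

section Exactness

variable {R B Z : Type*} [CommRing R] [Ring B] [Algebra R B] [AddCommGroup Z] [Module R Z]
  [Module B Z] [IsScalarTower R B Z] {α β φ : R} {F : ℤ → Submodule R Z}
  {U D lu ld : Module.End B Z} {S P Q Q' : Module.End R Z}

namespace IsStrippingSystem

variable
  (hS : IsStrippingSystem α β φ F (U.restrictScalars R) (D.restrictScalars R) S P Q Q')
  (hF : IsExhaustiveFiltration F) (hlu : lu.restrictScalars R ∈ orderLE F 0)
  (hld : ld.restrictScalars R ∈ orderLE F 0)

include hS hF hld

theorem diff₃_injective : Function.Injective (diff₃ β U D lu ld) := by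
  have hretraction := hS.approxRetraction₃ (lu := lu.restrictScalars R) hF hld
  exact hF.injective_of_approxRetraction (diff₃ β U D lu ld).toAddMonoidHom (fun y => P y.2)
    (map_zero P) hretraction

include hlu

theorem exact_diff₂_diff₁ (hcomp : diff₁ U D lu ld ∘ₗ diff₂ α β φ U D lu ld = 0) :
    Function.Exact (diff₂ α β φ U D lu ld) (diff₁ U D lu ld) := by
  have hhomotopy := hS.approxHomotopy₁ hF hlu hld
  exact (hF.prod hF).exact_of_approxHomotopy (diff₂ α β φ U D lu ld).toAddMonoidHom
    (diff₁ U D lu ld).toAddMonoidHom (AddMonoidHom.ext (LinearMap.congr_fun hcomp))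
    (fun y => (Q' y.1, Q y.1)) (fun z => (S z, P z)) (by simp) hhomotopy

theorem exact_diff₃_diff₂ (hcomp : diff₂ α β φ U D lu ld ∘ₗ diff₃ β U D lu ld = 0) :
    Function.Exact (diff₃ β U D lu ld) (diff₂ α β φ U D lu ld) := by
  have hhomotopy := hS.approxHomotopy₂ hF hlu hld
  exact (hF.prod hF).exact_of_approxHomotopy (diff₃ β U D lu ld).toAddMonoidHom
    (diff₂ α β φ U D lu ld).toAddMonoidHom (AddMonoidHom.ext (LinearMap.congr_fun hcomp))
    (fun y => P y.2) (fun y => (Q' y.1, Q y.1)) (by simp) hhomotopy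

end IsStrippingSystem

end Exactness

/-! ### The standard resolution and the upper bound -/

section Resolution

variable (R : Type*) {A : Type*} [CommRing R] [Ring A] [Algebra R A] (α β φ : R) (u d : A)
variable (M : Type*) [AddCommGroup M] [Module R M] [Module A M] [IsScalarTower R A M]

/-- The first differential of the standard resolution of `M` by induced modules. -/
noncomputable def inducedDiff₁ : (A ⊗[R] M) × (A ⊗[R] M) →ₗ[A] A ⊗[R] M :=
  diff₁ (innerMul R M u) (innerMul R M d) (innerSMul R M u) (innerSMul R M d)

variable {R}

/-- The second differential of the standard resolution of `M` by induced modules. -/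
noncomputable def inducedDiff₂ : (A ⊗[R] M) × (A ⊗[R] M) →ₗ[A] (A ⊗[R] M) × (A ⊗[R] M) :=
  diff₂ α β φ (innerMul R M u) (innerMul R M d) (innerSMul R M u) (innerSMul R M d)

/-- The third differential of the standard resolution of `M` by induced modules. -/
noncomputable def inducedDiff₃ : A ⊗[R] M →ₗ[A] (A ⊗[R] M) × (A ⊗[R] M) :=
  diff₃ β (innerMul R M u) (innerMul R M d) (innerSMul R M u) (innerSMul R M d)

variable {α β φ u d}

namespace DownUpRel

variable {M} in
theorem ddu_smul (h : DownUpRel α β φ u d) (m : M) :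
    d • d • u • m = α • d • u • d • m + β • u • d • d • m + φ • d • m := by
  simpa only [add_smul, mul_smul, smul_assoc] using congrArg (· • m) h.ddu

variable {M} in
theorem duu_smul (h : DownUpRel α β φ u d) (m : M) :
    d • u • u • m = α • u • d • u • m + β • u • u • d • m + φ • u • m := by
  simpa only [add_smul, mul_smul, smul_assoc] using congrArg (· • m) h.duu

theorem inducedDiff₁_comp_inducedDiff₂ (h : DownUpRel α β φ u d) :
    inducedDiff₁ R u d M ∘ₗ inducedDiff₂ α β φ u d M = 0 := by
  refine LinearMap.prod_ext (AlgebraTensorModule.ext fun a m => ?_)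
    (AlgebraTensorModule.ext fun a m => ?_)
  · simp only [inducedDiff₁, inducedDiff₂, diff₁, diff₂, dduFoxU, duuFoxU, dduFoxD, duuFoxD,
      LinearMap.coprod_comp_prod, LinearMap.comp_apply, LinearMap.coe_inl, LinearMap.coprod_apply,
      LinearMap.zero_comp, LinearMap.add_apply, LinearMap.sub_apply, LinearMap.smul_apply,
      LinearMap.zero_apply, LinearMap.map_smul_of_tower, Module.End.mul_apply, Module.End.one_apply,
      innerMul_tmul, innerSMul_tmul, map_add, map_sub, map_zero, add_zero, h.mul_ddu, h.ddu_smul,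
      add_tmul, ← smul_tmul', tmul_add, tmul_smul]
    module
  · simp only [inducedDiff₁, inducedDiff₂, diff₁, diff₂, dduFoxU, duuFoxU, dduFoxD, duuFoxD,
      LinearMap.coprod_comp_prod, LinearMap.comp_apply, LinearMap.coe_inr, LinearMap.coprod_apply,
      LinearMap.zero_comp, LinearMap.add_apply, LinearMap.sub_apply, LinearMap.smul_apply,
      LinearMap.zero_apply, LinearMap.map_smul_of_tower, Module.End.mul_apply, Module.End.one_apply,
      innerMul_tmul, innerSMul_tmul, map_add, map_sub, map_zero, zero_add, h.mul_duu, h.duu_smul,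
      add_tmul, ← smul_tmul', tmul_add, tmul_smul]
    module

theorem inducedDiff₂_comp_inducedDiff₃ (h : DownUpRel α β φ u d) :
    inducedDiff₂ α β φ u d M ∘ₗ inducedDiff₃ β u d M = 0 := by
  refine AlgebraTensorModule.ext fun a m => ?_
  simp only [inducedDiff₂, inducedDiff₃, diff₂, diff₃, dduFoxU, duuFoxU, dduFoxD, duuFoxD,
    LinearMap.comp_apply, LinearMap.prod_apply, Function.prod_apply, LinearMap.coprod_apply,
    LinearMap.add_apply, LinearMap.sub_apply, LinearMap.neg_apply, LinearMap.smul_apply,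
    LinearMap.zero_apply, LinearMap.map_smul_of_tower, Module.End.mul_apply, Module.End.one_apply,
    innerMul_tmul, innerSMul_tmul, map_add, map_sub, map_neg, h.mul_ddu, h.mul_duu, h.ddu_smul,
    h.duu_smul, add_tmul, ← smul_tmul', tmul_add, tmul_smul, Prod.mk_eq_zero]
  constructor <;> module

end DownUpRel

theorem exact_inducedDiff₁_actionMap (hgen : Algebra.adjoin R {u, d} = ⊤) :
    Function.Exact (inducedDiff₁ R u d M) (actionMap R A M) := by
  rw [LinearMap.exact_iff, ker_actionMap M hgen, inducedDiff₁, diff₁, LinearMap.range_coprod,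
    iSup_pair]

end Resolution

section Exactness

variable {R A : Type u} [CommRing R] [Ring A] [Algebra R A] {α β φ : R} {u d : A}
variable (M : Type*) [AddCommGroup M] [Module R M]

theorem restrictScalars_innerSMul_mem_orderLE [Module A M] [IsScalarTower R A M]
    {F : ℤ → Submodule R A} (x : A) :
    (innerSMul R M x).restrictScalars R ∈ orderLE (tensorFiltration M F) 0 :=
  lTensor_mem_orderLE (Algebra.lsmul R R M x)

namespace IsDownUpAlgebra

variable (h : IsDownUpAlgebra α β φ u d)

include h

theorem isExhaustiveFiltration_tensor :
    IsExhaustiveFiltration (tensorFiltration M (lengthFiltration R u d)) :=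
  h.isExhaustiveFiltration.tensorFiltration

theorem isStrippingSystem_innerMul : IsStrippingSystem α β φ
    (tensorFiltration M (lengthFiltration R u d)) ((innerMul R M u).restrictScalars R)
    ((innerMul R M d).restrictScalars R) (h.stripU.rTensor M) (h.stripD.rTensor M)
    (h.stripDU.rTensor M) (h.stripDD.rTensor M) :=
  h.isStrippingSystem.rTensor M

variable [Module A M] [IsScalarTower R A M]

theorem exact_inducedDiff₂_inducedDiff₁ :
    Function.Exact (inducedDiff₂ α β φ u d M) (inducedDiff₁ R u d M) :=
  (h.isStrippingSystem_innerMul M).exact_diff₂_diff₁ (h.isExhaustiveFiltration_tensor M)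
    (restrictScalars_innerSMul_mem_orderLE M u) (restrictScalars_innerSMul_mem_orderLE M d)
    (h.inducedDiff₁_comp_inducedDiff₂ M)

theorem exact_inducedDiff₃_inducedDiff₂ :
    Function.Exact (inducedDiff₃ β u d M) (inducedDiff₂ α β φ u d M) :=
  (h.isStrippingSystem_innerMul M).exact_diff₃_diff₂ (h.isExhaustiveFiltration_tensor M)
    (restrictScalars_innerSMul_mem_orderLE M u) (restrictScalars_innerSMul_mem_orderLE M d)
    (h.inducedDiff₂_comp_inducedDiff₃ M)

theorem inducedDiff₃_injective : Function.Injective (inducedDiff₃ β u d M) :=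
  (h.isStrippingSystem_innerMul M).diff₃_injective (h.isExhaustiveFiltration_tensor M)
    (restrictScalars_innerSMul_mem_orderLE M d)

end IsDownUpAlgebra

end Exactness

theorem IsDownUpAlgebra.globalDimLE {R A : Type u} [CommRing R] [Ring A] [Algebra R A]
    {α β φ : R} {u d : A} (h : IsDownUpAlgebra α β φ u d) {n : ℕ} (hR : GlobalDimLE R n) :
    GlobalDimLE A (n + 3) := by
  refine globalDimLE_of_isScalarTower R fun M _ _ _ _ => ?_
  have : Module.Free R A := Module.Free.of_basis h.basis
  have hinduced : ProjDimLE A (A ⊗[R] M) n := (hR M).baseChange A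
  have hprod : ProjDimLE A ((A ⊗[R] M) × (A ⊗[R] M)) n := hinduced.prod hinduced
  have hrange₃ := hinduced.range_of_injective (h.inducedDiff₃_injective M)
  have hrange₂ := ProjDimLE.range_of_exact (h.exact_inducedDiff₃_inducedDiff₂ M) hrange₃
    (hprod.mono (by omega))
  have hrange₁ := ProjDimLE.range_of_exact (h.exact_inducedDiff₂_inducedDiff₁ M) hrange₂
    (hprod.mono (by omega))
  exact (ProjDimLE.range_of_exact (exact_inducedDiff₁_actionMap M h.adjoin_eq_top) hrange₁
    (hinduced.mono (by omega))).of_range_of_surjective (actionMap_surjective M)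

/-! ### Nonvanishing of Ext and the lower bound -/

open CategoryTheory Abelian

section ExtLongExactSequence

variable {C : Type u} [Category.{v} C] [Abelian C] [HasExt.{w} C] {S : ShortComplex C} {N : C}

theorem nontrivial_ext_of_forall_comp_ne (hS : S.ShortExact) {k : ℕ} {e : Ext S.X₁ N k}
    (he : ∀ x : Ext S.X₂ N k, (Ext.mk₀ S.f).comp x (zero_add k) ≠ e) :
    Nontrivial (Ext S.X₃ N (k + 1)) := by
  refine ⟨hS.extClass.comp e (add_comm 1 k), 0, fun hzero => ?_⟩
  obtain ⟨x, hx⟩ := Ext.contravariant_sequence_exact₁ hS _ e (add_comm 1 k) hzero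
  exact he x hx

theorem nontrivial_ext_one_of_forall_comp_ne (hS : S.ShortExact) {p : S.X₁ ⟶ N}
    (hp : ∀ q : S.X₂ ⟶ N, S.f ≫ q ≠ p) : Nontrivial (Ext S.X₃ N 1) := by
  refine nontrivial_ext_of_forall_comp_ne hS (e := Ext.mk₀ p) fun x hx => ?_
  obtain ⟨q, rfl⟩ := (Ext.mk₀_bijective _ _).2 x
  rw [Ext.mk₀_comp_mk₀] at hx
  exact hp q ((Ext.mk₀_bijective _ _).1 hx)

theorem nontrivial_ext_of_projective (hS : S.ShortExact) [Projective S.X₂] {k : ℕ}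
    (h : Nontrivial (Ext S.X₁ N (k + 1))) : Nontrivial (Ext S.X₃ N (k + 2)) := by
  obtain ⟨e, he⟩ := exists_ne (0 : Ext S.X₁ N (k + 1))
  refine nontrivial_ext_of_forall_comp_ne hS (e := e) fun x hx => he ?_
  rw [← hx, Ext.eq_zero_of_projective x, Ext.comp_zero]

theorem nontrivial_ext_of_smul_id_eq_zero {R : Type*} [CommRing R] [Linear R C] {r : R} {X Z : C}
    {g : X ⟶ Z} {w : (r • 𝟙 X) ≫ g = 0} (hS : (ShortComplex.mk (r • 𝟙 X) g w).ShortExact)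
    (hN : r • 𝟙 N = 0) {k : ℕ} (h : Nontrivial (Ext X N k)) : Nontrivial (Ext Z N (k + 1)) := by
  obtain ⟨e, he⟩ := exists_ne (0 : Ext X N k)
  refine nontrivial_ext_of_forall_comp_ne hS (e := e) fun x hx => he ?_
  have hmk : Ext.mk₀ (r • 𝟙 X) = r • Ext.mk₀ (𝟙 X) := by
    rw [Ext.smul_eq_comp_mk₀, Ext.mk₀_comp_mk₀, Category.id_comp]
  rw [← hx, hmk, Ext.smul_comp, Ext.mk₀_id_comp, Ext.smul_eq_comp_mk₀, hN, Ext.mk₀_zero,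
    Ext.comp_zero]

end ExtLongExactSequence

section ExtModules

variable {A X Y Z N : Type u} [Ring A] [AddCommGroup X] [AddCommGroup Y] [AddCommGroup Z]
  [AddCommGroup N] [Module A X] [Module A Y] [Module A Z] [Module A N]

/-- The group `Extᵏ` of two `A`-modules does not vanish. -/
abbrev ExtNontrivial (A : Type u) [Ring A] (M N : Type u) [AddCommGroup M] [Module A M]
    [AddCommGroup N] [Module A N] (k : ℕ) : Prop :=
  Nontrivial (Ext.{u} (ModuleCat.of A M) (ModuleCat.of A N) k)

theorem extNontrivial_one_range {f : X →ₗ[A] Y} {g : Y →ₗ[A] Z} (hfg : Function.Exact f g)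
    (hf : Function.Injective f) {p : X →ₗ[A] N} (hp : ∀ q : Y →ₗ[A] N, q ∘ₗ f ≠ p) :
    ExtNontrivial A (LinearMap.range g) N 1 := by
  refine nontrivial_ext_one_of_forall_comp_ne (spliceComplex_shortExact hfg)
    (p := ModuleCat.ofHom (p ∘ₗ (LinearEquiv.ofInjective f hf).symm)) fun q hq => hp q.hom ?_
  ext x
  have hqx := congr($(hq).hom (LinearEquiv.ofInjective f hf x))
  exact hqx.trans (congrArg p ((LinearEquiv.ofInjective f hf).symm_apply_apply x))

theorem ExtNontrivial.range_of_exact [Module.Projective A Y] {f : X →ₗ[A] Y} {g : Y →ₗ[A] Z}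
    (hfg : Function.Exact f g) {k : ℕ} (h : ExtNontrivial A (LinearMap.range f) N (k + 1)) :
    ExtNontrivial A (LinearMap.range g) N (k + 2) := by
  have : Projective (spliceComplex f g hfg).X₂ := (IsProjective.iff_projective Y).1 inferInstance
  exact nontrivial_ext_of_projective (spliceComplex_shortExact hfg) h

theorem ExtNontrivial.of_linearEquiv {k : ℕ} (h : ExtNontrivial A X N k) (e : X ≃ₗ[A] Y) :
    ExtNontrivial A Y N k :=
  let f := ((extFunctor k).mapIso e.toModuleIso.op).app (ModuleCat.of A N)
  @Equiv.nontrivial _ _ f.addCommGroupIsoToAddEquiv.toEquiv h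

open scoped ModuleCat.Algebra in
theorem ExtNontrivial.of_exact_smul {R : Type*} [CommRing R] [Algebra R A] {r : R}
    {g : X →ₗ[A] Z} (hinj : ∀ x : X, algebraMap R A r • x = 0 → x = 0)
    (hexact : ∀ x, g x = 0 ↔ ∃ y, algebraMap R A r • y = x) (hg : Function.Surjective g)
    (hN : ∀ y : N, algebraMap R A r • y = 0) {k : ℕ} (h : ExtNontrivial A X N k) :
    ExtNontrivial A Z N (k + 1) := by
  refine nontrivial_ext_of_smul_id_eq_zero (r := r) (g := ModuleCat.ofHom g) (w := ?_) ?_ ?_ h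
  · ext x
    exact (hexact _).2 ⟨x, rfl⟩
  · refine ModuleCat.shortComplex_shortExact _ hexact ?_ hg
    exact (injective_iff_map_eq_zero (ModuleCat.Hom.hom _)).2 hinj
  · ext y
    exact hN y

end ExtModules

section ExtThree

variable {R A M N : Type u} [CommRing R] [Ring A] [Algebra R A] {α β φ : R} {u d : A}
  [AddCommGroup M] [Module R M] [Module A M] [IsScalarTower R A M] [AddCommGroup N] [Module A N]

theorem inducedDiff₃_one_tmul {m : M} (hu : u • m = 0) (hd : d • m = 0) :
    inducedDiff₃ β u d M (1 ⊗ₜ m) = u • (-(β • 1 ⊗ₜ m), 0) + d • (0, 1 ⊗ₜ m) := by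
  simp [inducedDiff₃, diff₃, hu, hd, smul_tmul']

theorem IsDownUpAlgebra.extNontrivial_three (h : IsDownUpAlgebra α β φ u d) [Module.Projective R M]
    {p : M →ₗ[A] N} {m : M} (hm : p m ≠ 0) (hu : u • m = 0) (hd : d • m = 0)
    (huN : ∀ y : N, u • y = 0) (hdN : ∀ y : N, d • y = 0) : ExtNontrivial A M N 3 := by
  have not_factor (q : (A ⊗[R] M) × (A ⊗[R] M) →ₗ[A] N) :
      q ∘ₗ inducedDiff₃ β u d M ≠ p ∘ₗ actionMap R A M := by
    intro hq
    have hqm := congr($hq (1 ⊗ₜ m))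
    rw [LinearMap.comp_apply, inducedDiff₃_one_tmul hu hd, map_add, map_smul, map_smul, huN, hdN,
      add_zero, LinearMap.comp_apply, actionMap_tmul, one_smul] at hqm
    exact hm hqm.symm
  have hrange₂ := extNontrivial_one_range (h.exact_inducedDiff₃_inducedDiff₂ M)
    (h.inducedDiff₃_injective M) not_factor
  have hrange₁ := hrange₂.range_of_exact (h.exact_inducedDiff₂_inducedDiff₁ M)
  have hrange₀ := hrange₁.range_of_exact (exact_inducedDiff₁_actionMap M h.adjoin_eq_top)
  exact hrange₀.of_linearEquiv
    (LinearEquiv.ofTop _ (LinearMap.range_eq_top.2 (actionMap_surjective M)))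

end ExtThree

section AlongHom

variable {A S S' : Type*} [Ring A] [CommRing S] [CommRing S']

/-- The ring `S` as a module over `A` through the ring homomorphism `g : A → S`. It is a type
synonym so that different homomorphisms give different modules. -/
def AlongHom (_ : A →+* S) : Type _ := S

namespace AlongHom

instance (g : A →+* S) : AddCommGroup (AlongHom g) := inferInstanceAs (AddCommGroup S)

instance (g : A →+* S) : Module A (AlongHom g) := Module.compHom S g

/-- A homomorphism of commutative rings as a homomorphism of modules over a third ring. -/
def map (g : A →+* S) (f : S →+* S') : AlongHom g →ₗ[A] AlongHom (f.comp g) where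
  toFun := f
  map_add' := map_add f
  map_smul' a x := map_mul f (g a) x

end AlongHom

end AlongHom

section Variables

/-- The substitution `t₀ ↦ 0`, `tᵢ₊₁ ↦ tᵢ`. -/
noncomputable def evalFirstZero (K : Type*) [CommRing K] (n : ℕ) :
    MvPolynomial (Fin (n + 1)) K →+* MvPolynomial (Fin n) K :=
  Polynomial.constantCoeff.comp (finSuccEquiv K n).toRingHom

variable {K : Type*} [CommRing K] {n : ℕ}

theorem evalFirstZero_surjective : Function.Surjective (evalFirstZero K n) :=
  Polynomial.constantCoeff_surjective.comp (finSuccEquiv K n).surjective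

theorem evalFirstZero_eq_zero_iff {p : MvPolynomial (Fin (n + 1)) K} :
    evalFirstZero K n p = 0 ↔ ∃ q, X 0 * q = p := by
  have hcoeff : evalFirstZero K n p = (finSuccEquiv K n p).coeff 0 := rfl
  rw [hcoeff, ← Polynomial.X_dvd_iff, ← finSuccEquiv_X_zero, map_dvd_iff, dvd_def]
  simp only [eq_comm]

theorem constantCoeff_comp_evalFirstZero :
    constantCoeff.comp (evalFirstZero K n) = constantCoeff := by
  refine MvPolynomial.ringHom_ext (fun a => ?_) (Fin.cases ?_ fun i => ?_)
  · simp [evalFirstZero, finSuccEquiv_apply]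
  · simp [evalFirstZero, finSuccEquiv_X_zero]
  · simp [evalFirstZero, finSuccEquiv_X_succ]

theorem exists_extNontrivial_of_alongHom {K R A : Type u} [Field K] [CommRing R] [Ring A]
    [Algebra R A] {ε : A →+* K} {n k : ℕ} {g : A →+* MvPolynomial (Fin n) K}
    (hg : Function.Surjective (g.comp (algebraMap R A))) (hε : constantCoeff.comp g = ε)
    (h : ExtNontrivial A (AlongHom g) (AlongHom ε) k) :
    ∃ X : ModuleCat.{u} A, Nontrivial (Ext.{u} X (ModuleCat.of A (AlongHom ε)) (k + n)) := by
  induction n generalizing k with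
  | zero => exact ⟨_, h⟩
  | succ n ih =>
    rw [← add_assoc, add_right_comm]
    obtain ⟨r, hr⟩ := hg (X 0)
    have smul_eq_X_mul (x : MvPolynomial (Fin (n + 1)) K) :
        algebraMap R A r • (show AlongHom g from x) = (X 0 * x : MvPolynomial (Fin (n + 1)) K) :=
      congrArg (· * x) hr
    have hεr : ε (algebraMap R A r) = 0 := by
      rw [← hε]
      exact (congrArg constantCoeff hr).trans (constantCoeff_X K 0)
    refine ih (g := (evalFirstZero K n).comp g) ?_ ?_ ?_
    · exact evalFirstZero_surjective.comp hg
    · rw [← RingHom.comp_assoc, constantCoeff_comp_evalFirstZero, hε]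
    · refine h.of_exact_smul (r := r) (g := AlongHom.map g (evalFirstZero K n))
        (fun x hx => ?_) (fun p => ?_) evalFirstZero_surjective fun y => ?_
      · exact (mul_eq_zero.1 ((smul_eq_X_mul x).symm.trans hx)).resolve_left (X_ne_zero 0)
      · exact evalFirstZero_eq_zero_iff.trans
          (exists_congr fun q => by rw [← smul_eq_X_mul q]; rfl)
      · exact (congrArg (· * (show K from y)) hεr).trans (zero_mul _)

end Variables

section ConcreteExt

variable {A : Type} [Ring A] {X : ModuleCat.{0} A}

theorem subsingleton_rootExt_iff (P : ProjectiveResolution X) (Y : ModuleCat.{0} A) (k : ℕ) :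
    Subsingleton (((_root_.Ext ℤ (ModuleCat.{0} A) (k + 1)).obj (Opposite.op X)).obj Y) ↔
      ∀ f : P.complex.X (k + 1) ⟶ Y, P.complex.d (k + 2) (k + 1) ≫ f = 0 →
        ∃ g : P.complex.X k ⟶ Y, P.complex.d (k + 1) k ≫ g = f := by
  rw [← ModuleCat.isZero_iff_subsingleton, (P.isoExt (R := ℤ) (k + 1) Y).isZero_iff,
    ← HomologicalComplex.exactAt_iff_isZero_homology,
    HomologicalComplex.exactAt_iff' _ k (k + 1) (k + 2) (by simp) (by simp),
    ShortComplex.moduleCat_exact_iff]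
  rfl

theorem subsingleton_ext_iff (P : ProjectiveResolution X) (Y : ModuleCat.{0} A) (k : ℕ) :
    Subsingleton (Abelian.Ext.{0} X Y (k + 1)) ↔
      ∀ f : P.complex.X (k + 1) ⟶ Y, P.complex.d (k + 2) (k + 1) ≫ f = 0 →
        ∃ g : P.complex.X k ⟶ Y, P.complex.d (k + 1) k ≫ g = f := by
  refine ⟨fun _ f hf => ?_, fun h => subsingleton_of_forall_eq 0 fun a => ?_⟩
  · rw [← P.extMk_eq_zero_iff f (k + 2) rfl hf k rfl]
    exact Subsingleton.elim _ _
  · obtain ⟨f, hf, rfl⟩ := P.extMk_surjective a (k + 2) rfl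
    exact (P.extMk_eq_zero_iff f (k + 2) rfl hf k rfl).2 (h f hf)

theorem nontrivial_rootExt_iff_nontrivial_ext {Y : ModuleCat.{0} A} {k : ℕ} :
    Nontrivial (((_root_.Ext ℤ (ModuleCat.{0} A) (k + 1)).obj (Opposite.op X)).obj Y) ↔
      Nontrivial (Abelian.Ext.{0} X Y (k + 1)) := by
  obtain ⟨P⟩ := HasProjectiveResolution.out (Z := X)
  rw [← not_subsingleton_iff_nontrivial, ← not_subsingleton_iff_nontrivial,
    subsingleton_rootExt_iff P, subsingleton_ext_iff P]

theorem GlobalDimLE.globalDim_le {n : ℕ} (h : GlobalDimLE A n) : globalDim A ≤ n := by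
  refine sSup_le ?_
  rintro _ ⟨k, rfl, X, Y, hXY⟩
  by_contra hnk
  rw [not_le, Nat.cast_lt] at hnk
  obtain ⟨k, rfl⟩ := Nat.exists_eq_add_of_lt hnk
  rw [nontrivial_rootExt_iff_nontrivial_ext] at hXY
  obtain ⟨e, he⟩ := exists_ne (0 : Abelian.Ext.{0} X Y (n + k + 1))
  have : HasProjectiveDimensionLT X (n + 1) := h X
  exact he (Ext.eq_zero_of_hasProjectiveDimensionLT e (n + 1) (by omega))

theorem le_globalDim {X Y : ModuleCat.{0} A} {k : ℕ}
    (h : Nontrivial (Abelian.Ext.{0} X Y (k + 1))) : ((k + 1 : ℕ) : ℕ∞) ≤ globalDim A :=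
  le_sSup ⟨k + 1, rfl, X, Y, nontrivial_rootExt_iff_nontrivial_ext.2 h⟩

end ConcreteExt

/-! ### Global dimension of down-up algebras -/

section Augmentation

variable {R A : Type u} [CommRing R] [Ring A] [Algebra R A] {α β φ : R} {u d : A}

theorem IsDownUpAlgebra.exists_augmentation (h : IsDownUpAlgebra α β φ u d) :
    ∃ ε : A →ₐ[R] R, ε u = 0 ∧ ε d = 0 :=
  h.exists_lift R 0 0 ⟨by simp, by simp⟩

theorem IsDownUpAlgebra.extNontrivial_alongHom_three (h : IsDownUpAlgebra α β φ u d)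
    {ε : A →ₐ[R] R} (hu : ε u = 0) (hd : ε d = 0) {S : Type u} [CommRing S] [Nontrivial S]
    (χ : R →+* S) :
    ExtNontrivial A (AlongHom (ε : A →+* R)) (AlongHom (χ.comp (ε : A →+* R))) 3 := by
  let : Module R (AlongHom (ε : A →+* R)) := inferInstanceAs (Module R R)
  have : IsScalarTower R A (AlongHom (ε : A →+* R)) := ⟨fun r a m => by
    change ε (r • a) * (show R from m) = r * (ε a * (show R from m))
    rw [map_smul, smul_eq_mul, mul_assoc]⟩
  have : Module.Projective R (AlongHom (ε : A →+* R)) := inferInstanceAs (Module.Projective R R)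
  have smul_eq_zero {x : A} (hx : ε x = 0) (y : AlongHom (χ.comp (ε : A →+* R))) : x • y = 0 := by
    change χ (ε x) * (show S from y) = 0
    rw [hx, map_zero, zero_mul]
  refine h.extNontrivial_three (p := AlongHom.map (ε : A →+* R) χ) (m := (1 : R)) ?_ ?_ ?_
    (smul_eq_zero hu) (smul_eq_zero hd)
  · change χ 1 ≠ 0
    rw [map_one]
    exact one_ne_zero
  · exact (mul_one (ε u)).trans hu
  · exact (mul_one (ε d)).trans hd

end Augmentation

section Presentation

variable {K : Type} [Field K] {n : ℕ}

theorem smul_eq_C_smul (a : K) (x : F K n) : a • x = (C a : MvPolynomial (Fin n) K) • x := by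
  rw [Algebra.smul_def, Algebra.smul_def]
  rfl

theorem forall_rel_imp_eq_iff_downUpRel {B : Type*} [Ring B]
    [Algebra (MvPolynomial (Fin n) K) B] {α β : K} {φ : MvPolynomial (Fin n) K}
    (f : F K n →ₐ[MvPolynomial (Fin n) K] B) :
    (∀ ⦃x y⦄, Rel α β φ x y → f x = f y) ↔ DownUpRel (C α) (C β) φ (f uF) (f dF) := by
  have ddu_iff : f (dF * dF * uF) =
      f (α • (dF * uF * dF) + β • (uF * dF * dF) + algebraMap _ _ φ * dF) ↔
      f dF * f dF * f uF = (C α : MvPolynomial (Fin n) K) • (f dF * f uF * f dF) +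
        (C β : MvPolynomial (Fin n) K) • (f uF * f dF * f dF) + φ • f dF := by
    rw [smul_eq_C_smul, smul_eq_C_smul, ← Algebra.smul_def]
    simp only [map_mul, map_add, map_smul]
  have duu_iff : f (dF * uF * uF) =
      f (α • (uF * dF * uF) + β • (uF * uF * dF) + uF * algebraMap _ _ φ) ↔
      f dF * f uF * f uF = (C α : MvPolynomial (Fin n) K) • (f uF * f dF * f uF) +
        (C β : MvPolynomial (Fin n) K) • (f uF * f uF * f dF) + φ • f uF := by
    rw [smul_eq_C_smul, smul_eq_C_smul, ← Algebra.commutes, ← Algebra.smul_def]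
    simp only [map_mul, map_add, map_smul]
  constructor
  · exact fun h => ⟨ddu_iff.1 (h .ddu), duu_iff.1 (h .duu)⟩
  · rintro h _ _ (_ | _)
    exacts [ddu_iff.2 h.ddu, duu_iff.2 h.duu]

theorem adjoin_uF_dF : Algebra.adjoin (MvPolynomial (Fin n) K) {uF, dF} =
    (⊤ : Subalgebra (MvPolynomial (Fin n) K) (F K n)) := by
  rw [eq_top_iff, ← FreeAlgebra.adjoin_range_ι]
  refine Algebra.adjoin_mono ?_
  rintro _ ⟨_ | _, rfl⟩
  exacts [Or.inl rfl, Or.inr rfl]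

variable (α β : K) (φ : MvPolynomial (Fin n) K)

theorem isDownUpAlgebra_A : IsDownUpAlgebra (C α) (C β) φ
    (RingQuot.mkAlgHom (MvPolynomial (Fin n) K) (Rel α β φ) uF)
    (RingQuot.mkAlgHom (MvPolynomial (Fin n) K) (Rel α β φ) dF) where
  toDownUpRel := (forall_rel_imp_eq_iff_downUpRel _).1 fun _ _ hxy => RingQuot.mkAlgHom_rel _ hxy
  adjoin_eq_top := by
    rw [← Set.image_pair, ← AlgHom.map_adjoin, adjoin_uF_dF, Algebra.map_top,
      AlgHom.range_eq_top]
    exact RingQuot.mkAlgHom_surjective _ _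
  exists_lift B _ _ x y hxy := by
    let f : F K n →ₐ[MvPolynomial (Fin n) K] B := FreeAlgebra.lift _ (Gen.rec x y)
    have hfu : f uF = x := FreeAlgebra.lift_ι_apply _ _
    have hfd : f dF = y := FreeAlgebra.lift_ι_apply _ _
    have hf := (forall_rel_imp_eq_iff_downUpRel f).2 (by rwa [hfu, hfd])
    refine ⟨RingQuot.liftAlgHom _ ⟨f, hf⟩, ?_, ?_⟩
    · rw [RingQuot.liftAlgHom_mkAlgHom_apply, hfu]
    · rw [RingQuot.liftAlgHom_mkAlgHom_apply, hfd]

end Presentation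

end DownUp

open DownUp in
theorem downUp_globalDim_general {K A : Type} [Field K] {n : ℕ} [Ring A]
    [Algebra (MvPolynomial (Fin n) K) A] {α β φ : MvPolynomial (Fin n) K} {u d : A}
    (h : IsDownUpAlgebra α β φ u d) : globalDim A = (n : ℕ∞) + 3 := by
  refine le_antisymm (h.globalDimLE (globalDimLE_mvPolynomial K n)).globalDim_le ?_
  obtain ⟨ε, hu, hd⟩ := h.exists_augmentation
  obtain ⟨X, hX⟩ := exists_extNontrivial_of_alongHom (fun r => ⟨r, ε.commutes r⟩) rfl
    (h.extNontrivial_alongHom_three hu hd (constantCoeff (R := K)))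
  rw [add_comm] at hX
  exact le_globalDim hX

open DownUp in
/-- The global dimension of the down-up algebra A(α,β,φ) over K[t₁,…,tₙ]
equals n+3, for all α, β, φ. -/
theorem downUp_globalDim {K : Type} [Field K] {n : ℕ}
    (α β : K) (φ : MvPolynomial (Fin n) K) :
    globalDim (A α β φ) = (n : ℕ∞) + 3 :=
  downUp_globalDim_general (isDownUpAlgebra_A α β φ)
end

section
/- The down-up algebra A(α,β,φ) over K[t₁,…,tₙ] is a prime ring if and only if not all of α, β, φ are zero. -/
open MvPolynomial

/-!
If `β` is a unit, the commuting elements `x = u d` and `y = d u` satisfy `d x = y d` and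
`d y = (α y + β x + φ) d`, and `x ↦ y`, `y ↦ α y + β x + φ` is an automorphism `σ` of `R[x, y]`. The
down-up algebra is then a generalized Weyl algebra; it embeds into the skew Laurent ring
`R[x, y][d^±1; σ]` by `u ↦ d⁻¹ x`, so it is a domain.

If `β = 0`, every element is a sum of terms `uⁱ q(y) dᵏ`, and the algebra acts on the generic Verma
module `R[y][X]`: `u` multiplies by `X` and `d` sends `Xᵐ⁺¹` to `wₘ Xᵐ`, where `w₀ = y` and
`wₘ₊₁ = α wₘ + φ`. Unless `α = φ = 0`, all `wₘ` are nonzero. The action is then faithful, and for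
nonzero `a`, `b` and any `v` with `b v ≠ 0` a power of `d` lowers `b v` to a nonzero multiple of
`1`, which a power of `u` raises to some `Xᵏ` with `a Xᵏ ≠ 0`. Hence `a uᵏ dⁿ b ≠ 0`.

If all parameters vanish, then `d² A u = 0`.
-/

/-- Elementwise primeness of a ring: `a E b = 0` only if `a = 0` or `b = 0`. -/
def IsPrimeRing (E : Type*) [Ring E] : Prop :=
  ∀ a b : E, (∀ x, a * x * b = 0) → a = 0 ∨ b = 0

theorem isPrimeRing_of_noZeroDivisors (E : Type*) [Ring E] [NoZeroDivisors E] : IsPrimeRing E :=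
  fun a b h ↦ mul_eq_zero.mp (by simpa using h 1)

theorem span_eq_top_of_adjoin_eq_top {R E : Type*} [CommSemiring R] [Semiring E] [Algebra R E]
    {s t : Set E} (hs : Algebra.adjoin R s = ⊤) (one_mem : 1 ∈ t)
    (mul_mem : ∀ x ∈ s, ∀ y ∈ t, x * y ∈ t) : Submodule.span R t = ⊤ := by
  have mul_mem_span (x : E) (y : E) (hy : y ∈ Submodule.span R t) :
      x * y ∈ Submodule.span R t := by
    have hx : x ∈ Algebra.adjoin R s := hs ▸ Algebra.mem_top
    induction hx using Algebra.adjoin_induction generalizing y with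
    | mem x hx =>
      have hle : Submodule.span R t ≤ (Submodule.span R t).comap (LinearMap.mulLeft R x) :=
        Submodule.span_le.mpr fun z hz ↦ Submodule.subset_span (mul_mem x hx z hz)
      exact hle hy
    | algebraMap r => simpa only [← Algebra.smul_def] using Submodule.smul_mem _ r hy
    | add x₁ x₂ _ _ ih₁ ih₂ => simpa only [add_mul] using add_mem (ih₁ y hy) (ih₂ y hy)
    | mul x₁ x₂ _ _ ih₁ ih₂ => simpa only [mul_assoc] using ih₁ _ (ih₂ y hy)
  exact Submodule.eq_top_iff'.mpr fun x ↦
    by simpa using mul_mem_span x 1 (Submodule.subset_span one_mem)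

theorem skewMonoidAlgebra_coeff_mul_of_uniqueMul {B G : Type*} [Semiring B] [Mul G]
    [SMulZeroClass G B] {f g : SkewMonoidAlgebra B G} {a₀ b₀ : G}
    (h : UniqueMul f.support g.support a₀ b₀) :
    (f * g).coeff (a₀ * b₀) = f.coeff a₀ * a₀ • g.coeff b₀ := by
  classical
  simp_rw [SkewMonoidAlgebra.coeff_mul, SkewMonoidAlgebra.sum_def', ← Finset.sum_product']
  refine (Finset.sum_eq_single (a₀, b₀) ?_ ?_).trans (if_pos rfl)
  · rintro ⟨a, b⟩ hab hne
    obtain ⟨ha, hb⟩ := Finset.mem_product.mp hab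
    exact if_neg fun heq ↦ hne (Prod.ext (h ha hb heq).1 (h ha hb heq).2)
  · intro hab
    rw [if_pos rfl]
    rcases not_and_or.mp (mt Finset.mem_product.mpr hab) with ha | hb
    · rw [SkewMonoidAlgebra.notMem_support_iff.mp ha, zero_mul]
    · rw [SkewMonoidAlgebra.notMem_support_iff.mp hb, smul_zero, mul_zero]

instance skewMonoidAlgebra_noZeroDivisors {B G : Type*} [Semiring B] [NoZeroDivisors B] [Group G]
    [UniqueProds G] [MulSemiringAction G B] : NoZeroDivisors (SkewMonoidAlgebra B G) where
  eq_zero_or_eq_zero_of_mul_eq_zero {f g} hfg := by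
    contrapose! hfg
    simp only [ne_eq, ← SkewMonoidAlgebra.support_eq_empty, ← Finset.nonempty_iff_ne_empty] at hfg
    obtain ⟨a, ha, b, hb, h⟩ := UniqueProds.uniqueMul_of_nonempty hfg.1 hfg.2
    rw [SkewMonoidAlgebra.mem_support_iff] at ha hb
    intro hzero
    refine mul_ne_zero ha ((smul_ne_zero_iff_ne a).mpr hb) ?_
    rw [← skewMonoidAlgebra_coeff_mul_of_uniqueMul h, hzero, SkewMonoidAlgebra.coeff_zero,
      Finsupp.zero_apply]

theorem exists_skewMonoidAlgebra_single_pow {B G : Type*} [Semiring B] [IsDomain B] [Group G]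
    [MulSemiringAction G B] (g : G) {b : B} (hb : b ≠ 0) (n : ℕ) :
    ∃ c ≠ 0, SkewMonoidAlgebra.single g b ^ n = SkewMonoidAlgebra.single (g ^ n) c := by
  induction n with
  | zero => exact ⟨1, one_ne_zero, by rw [pow_zero, pow_zero, SkewMonoidAlgebra.single_one_one]⟩
  | succ n ih =>
    obtain ⟨c, hc, hpow⟩ := ih
    exact ⟨c * g ^ n • b, mul_ne_zero hc ((smul_ne_zero_iff_ne _).mpr hb),
      by rw [pow_succ, hpow, SkewMonoidAlgebra.single_mul_single, pow_succ]⟩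

theorem semiconjBy_polynomial_of_C_of_X {R S E : Type*} [CommSemiring R] [Semiring S] [Algebra R S]
    [Semiring E] [Algebra R E] {f g : Polynomial S →ₐ[R] E} {a : E}
    (hC : ∀ s, SemiconjBy a (f (.C s)) (g (.C s))) (hX : SemiconjBy a (f .X) (g .X))
    (p : Polynomial S) : SemiconjBy a (f p) (g p) := by
  induction p using Polynomial.induction_on' with
  | add p q hp hq => simpa only [map_add] using hp.add_right hq
  | monomial n s =>
    simpa only [← Polynomial.C_mul_X_pow_eq_monomial, map_mul, map_pow]
      using (hC s).mul_right (hX.pow_right n)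

theorem semiconjBy_polynomial_of_X {R E : Type*} [CommSemiring R] [Semiring E] [Algebra R E]
    {f g : Polynomial R →ₐ[R] E} {a : E} (hX : SemiconjBy a (f .X) (g .X)) (p : Polynomial R) :
    SemiconjBy a (f p) (g p) := by
  refine semiconjBy_polynomial_of_C_of_X (fun r ↦ ?_) hX p
  rw [Polynomial.C_eq_algebraMap, AlgHom.commutes, AlgHom.commutes]
  exact Algebra.commute_algebraMap_right r a

theorem semiconjBy_bivariate_of_X_of_Y {R E : Type*} [CommSemiring R] [Semiring E] [Algebra R E]
    {f g : Polynomial (Polynomial R) →ₐ[R] E} {a : E}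
    (hX : SemiconjBy a (f (.C .X)) (g (.C .X))) (hY : SemiconjBy a (f .X) (g .X))
    (p : Polynomial (Polynomial R)) : SemiconjBy a (f p) (g p) :=
  semiconjBy_polynomial_of_C_of_X (fun q ↦
    semiconjBy_polynomial_of_X (f := f.comp Polynomial.CAlgHom) (g := g.comp Polynomial.CAlgHom)
      hX q) hY p

namespace DownUp

section GeneralizedWeyl

open Multiplicative (ofAdd)

/-- The relations of a generalized Weyl algebra `B(σ, x)`, for elements `u`, `d` of an algebra `E`
receiving `B`. -/
structure IsGeneralizedWeylPair {R B E : Type*} [CommRing R] [Ring B] [Algebra R B] [Ring E]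
    [Algebra R E] (σ : B ≃ₐ[R] B) (ev : B →ₐ[R] E) (x : B) (u d : E) : Prop where
  semiconjBy_d : ∀ b, SemiconjBy d (ev b) (ev (σ b))
  semiconjBy_u : ∀ b, SemiconjBy u (ev (σ b)) (ev b)
  u_mul_d : u * d = ev x
  d_mul_u : d * u = ev (σ x)

/-- The element of degree `n` generating the `n`-th graded piece of a generalized Weyl algebra:
a power of `d` if `n ≥ 0`, a power of `u` if `n ≤ 0`. -/
def weylPower {E : Type*} [Monoid E] (u d : E) : ℤ → E
  | .ofNat n => d ^ n
  | .negSucc n => u ^ (n + 1)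

theorem weylPower_natCast {E : Type*} [Monoid E] (u d : E) (n : ℕ) : weylPower u d n = d ^ n := rfl

theorem weylPower_neg_natCast {E : Type*} [Monoid E] (u d : E) (n : ℕ) :
    weylPower u d (-n) = u ^ n := by
  cases n with
  | zero => exact (pow_zero d).trans (pow_zero u).symm
  | succ n => rfl

variable {R B E : Type*} [CommRing R] [Ring B] [Algebra R B] [Ring E] [Algebra R E]
  {σ : B ≃ₐ[R] B} {ev : B →ₐ[R] E} {x : B} {u d : E}

/-- The sum `∑ bₙ vₙ`, where `vₙ` is the generator `weylPower u d n` of degree `n`: the normal form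
of an element of a generalized Weyl algebra. -/
noncomputable def weylSum (ev : B →ₐ[R] E) (u d : E) : (ℤ →₀ B) →ₗ[R] E :=
  Finsupp.lsum R fun n ↦ (LinearMap.mulRight R (weylPower u d n)).comp ev.toLinearMap

theorem weylSum_single (n : ℤ) (b : B) :
    weylSum ev u d (Finsupp.single n b) = ev b * weylPower u d n := by
  simp [weylSum]

namespace IsGeneralizedWeylPair

variable (h : IsGeneralizedWeylPair σ ev x u d)
include h

theorem exists_d_mul_weylPower (n : ℤ) :
    ∃ c, d * weylPower u d n = ev c * weylPower u d (n + 1) := by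
  obtain ⟨m, rfl | rfl⟩ : ∃ m : ℕ, n = m ∨ n = -(m + 1 : ℕ) := by
    cases n with
    | ofNat m => exact ⟨m, .inl rfl⟩
    | negSucc m => exact ⟨m, .inr rfl⟩
  · refine ⟨1, ?_⟩
    rw [map_one, one_mul, ← Nat.cast_succ, weylPower_natCast, weylPower_natCast, pow_succ']
  · refine ⟨σ x, ?_⟩
    rw [show -((m + 1 : ℕ) : ℤ) + 1 = -m by lia, weylPower_neg_natCast, weylPower_neg_natCast,
      pow_succ', ← mul_assoc, h.d_mul_u]

theorem exists_u_mul_weylPower (n : ℤ) :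
    ∃ c, u * weylPower u d n = ev c * weylPower u d (n - 1) := by
  obtain ⟨m, rfl | rfl⟩ : ∃ m : ℕ, n = (m + 1 : ℕ) ∨ n = -m := by
    rcases lt_or_ge 0 n with hn | hn
    · exact ⟨n.toNat - 1, .inl (by lia)⟩
    · exact ⟨(-n).toNat, .inr (by lia)⟩
  · refine ⟨x, ?_⟩
    rw [Nat.cast_succ, add_sub_cancel_right, ← Nat.cast_succ, weylPower_natCast, weylPower_natCast,
      pow_succ', ← mul_assoc, h.u_mul_d]
  · refine ⟨1, ?_⟩
    rw [map_one, one_mul, show -(m : ℤ) - 1 = -(m + 1 : ℕ) by lia, weylPower_neg_natCast,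
      weylPower_neg_natCast, pow_succ']

theorem span_weylPower_eq_top (hgen : Algebra.adjoin R {u, d} = ⊤) :
    Submodule.span R (Set.range fun p : ℤ × B ↦ ev p.2 * weylPower u d p.1) = ⊤ := by
  refine span_eq_top_of_adjoin_eq_top hgen ⟨(0, 1), ?_⟩ ?_
  · change ev 1 * weylPower u d (0 : ℕ) = 1
    rw [map_one, one_mul, weylPower_natCast, pow_zero]
  · rintro _ (rfl | rfl) _ ⟨⟨n, b⟩, rfl⟩
    · obtain ⟨c, hc⟩ := h.exists_u_mul_weylPower n
      refine ⟨(n - 1, σ.symm b * c), ?_⟩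
      simp only [map_mul, mul_assoc, ← hc]
      rw [← mul_assoc, ← (h.semiconjBy_u (σ.symm b)).eq, σ.apply_symm_apply, mul_assoc]
    · obtain ⟨c, hc⟩ := h.exists_d_mul_weylPower n
      refine ⟨(n + 1, σ b * c), ?_⟩
      simp only [map_mul, mul_assoc, ← hc]
      rw [← mul_assoc, ← (h.semiconjBy_d b).eq, mul_assoc]

end IsGeneralizedWeylPair

theorem IsGeneralizedWeylPair.weylSum_surjective (h : IsGeneralizedWeylPair σ ev x u d)
    (hgen : Algebra.adjoin R {u, d} = ⊤) : Function.Surjective (weylSum ev u d) := by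
  rw [← LinearMap.range_eq_top, ← top_le_iff, ← h.span_weylPower_eq_top hgen, Submodule.span_le]
  rintro _ ⟨⟨n, b⟩, rfl⟩
  exact ⟨Finsupp.single n b, weylSum_single n b⟩

variable [IsDomain B] [MulSemiringAction (Multiplicative ℤ) B]
  {f : E →+* SkewMonoidAlgebra B (Multiplicative ℤ)}
  (hd : f d = SkewMonoidAlgebra.single (ofAdd 1) 1) (hx : x ≠ 0)
  (hu : f u = SkewMonoidAlgebra.single (ofAdd 1)⁻¹ x)

include hd hx hu

theorem exists_map_weylPower_eq_single (n : ℤ) :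
    ∃ c ≠ 0, f (weylPower u d n) = SkewMonoidAlgebra.single (ofAdd n) c := by
  obtain ⟨m, rfl | rfl⟩ := n.eq_nat_or_neg
  · obtain ⟨c, hc, hpow⟩ := exists_skewMonoidAlgebra_single_pow (ofAdd (1 : ℤ)) (one_ne_zero' B) m
    refine ⟨c, hc, ?_⟩
    rw [weylPower_natCast, map_pow, hd, hpow, ← ofAdd_nsmul, nsmul_one]
  · obtain ⟨c, hc, hpow⟩ := exists_skewMonoidAlgebra_single_pow (ofAdd (1 : ℤ))⁻¹ hx m
    refine ⟨c, hc, ?_⟩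
    rw [weylPower_neg_natCast, map_pow, hu, hpow, ← ofAdd_neg, ← ofAdd_nsmul, nsmul_eq_mul,
      mul_neg_one]

theorem IsGeneralizedWeylPair.injective_of_map_eq_single (h : IsGeneralizedWeylPair σ ev x u d)
    (hgen : Algebra.adjoin R {u, d} = ⊤) (hev : ∀ b, f (ev b) = SkewMonoidAlgebra.single 1 b) :
    Function.Injective f := by
  choose c hc hpow using exists_map_weylPower_eq_single hd hx hu
  have coeff_map_weylSum (b : ℤ →₀ B) (n : ℤ) :
      (f (weylSum ev u d b)).coeff (ofAdd n) = b n * c n := by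
    induction b using Finsupp.induction_linear with
    | zero => simp
    | add b₁ b₂ ih₁ ih₂ => simp [ih₁, ih₂, add_mul]
    | single m b =>
      rw [weylSum_single, map_mul, hev, hpow, SkewMonoidAlgebra.single_mul_single, one_mul,
        one_smul, SkewMonoidAlgebra.coeff_single]
      obtain rfl | hne := eq_or_ne m n
      · simp
      · simp [hne]
  refine (injective_iff_map_eq_zero f).mpr fun e he ↦ ?_
  obtain ⟨b, rfl⟩ := h.weylSum_surjective hgen e
  have b_eq_zero : b = 0 := Finsupp.ext fun n ↦ by
    have hn := coeff_map_weylSum b n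
    rw [he, SkewMonoidAlgebra.coeff_zero, Finsupp.zero_apply] at hn
    exact (mul_eq_zero.mp hn.symm).resolve_right (hc n)
  rw [b_eq_zero, map_zero]

end GeneralizedWeyl

section Presentation

variable {R E : Type*} [CommRing R] [Ring E] [Algebra R E]

/-- The defining relations of a down-up algebra, for elements `u`, `d` of an `R`-algebra. -/
structure IsDownUpPair (α β φ : R) (u d : E) : Prop where
  ddu : d * d * u = α • (d * u * d) + β • (u * d * d) + φ • d
  duu : d * u * u = α • (u * d * u) + β • (u * u * d) + φ • u

/-- The defining relations of `DownUpAlgebra`, as a relation on the free algebra. -/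
inductive DownUpRel_s15 (α β φ : R) : FreeAlgebra R Gen → FreeAlgebra R Gen → Prop
  | ddu : DownUpRel_s15 α β φ (.ι R .d * .ι R .d * .ι R .u)
      (α • (.ι R .d * .ι R .u * .ι R .d) + β • (.ι R .u * .ι R .d * .ι R .d) + φ • .ι R .d)
  | duu : DownUpRel_s15 α β φ (.ι R .d * .ι R .u * .ι R .u)
      (α • (.ι R .u * .ι R .d * .ι R .u) + β • (.ι R .u * .ι R .u * .ι R .d) + φ • .ι R .u)

/-- The down-up algebra over an arbitrary commutative ring `R`, with all three parameters in `R`. -/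
abbrev DownUpAlgebra (α β φ : R) := RingQuot (DownUpRel_s15 α β φ)

theorem rel_eq_downUpRel {K : Type} [Field K] {n : ℕ} (α β : K) (φ : MvPolynomial (Fin n) K) :
    Rel α β φ = DownUpRel_s15 (C α) (C β) φ := by
  have smul_eq_C_smul (c : K) (x : F K n) : c • x = (C c : MvPolynomial (Fin n) K) • x :=
    (algebraMap_smul (MvPolynomial (Fin n) K) c x).symm
  ext a b
  constructor
  · rintro (_ | _)
    · rw [smul_eq_C_smul, smul_eq_C_smul, ← Algebra.smul_def]
      exact .ddu
    · rw [smul_eq_C_smul, smul_eq_C_smul, ← Algebra.commutes, ← Algebra.smul_def]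
      exact .duu
  · rintro (_ | _)
    · rw [← smul_eq_C_smul, ← smul_eq_C_smul, Algebra.smul_def φ]
      exact .ddu
    · rw [← smul_eq_C_smul, ← smul_eq_C_smul, Algebra.smul_def φ, Algebra.commutes φ]
      exact .duu

namespace DownUpAlgebra

variable (α β φ : R)

/-- The generator `u` of the down-up algebra. -/
noncomputable def u : DownUpAlgebra α β φ := RingQuot.mkAlgHom R _ (.ι R .u)

/-- The generator `d` of the down-up algebra. -/
noncomputable def d : DownUpAlgebra α β φ := RingQuot.mkAlgHom R _ (.ι R .d)

theorem isDownUpPair : IsDownUpPair α β φ (u α β φ) (d α β φ) where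
  ddu := by simpa [u, d] using RingQuot.mkAlgHom_rel R (DownUpRel_s15.ddu (α := α) (β := β) (φ := φ))
  duu := by simpa [u, d] using RingQuot.mkAlgHom_rel R (DownUpRel_s15.duu (α := α) (β := β) (φ := φ))

theorem adjoin_eq_top : Algebra.adjoin R {u α β φ, d α β φ} = ⊤ := by
  have image_generators : RingQuot.mkAlgHom R (DownUpRel_s15 α β φ) '' Set.range (FreeAlgebra.ι R) =
      {u α β φ, d α β φ} := by
    ext x
    constructor
    · rintro ⟨_, ⟨_ | _, rfl⟩, rfl⟩
      exacts [Or.inl rfl, Or.inr rfl]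
    · rintro (rfl | rfl)
      exacts [⟨_, ⟨Gen.u, rfl⟩, rfl⟩, ⟨_, ⟨Gen.d, rfl⟩, rfl⟩]
  rw [← image_generators, ← AlgHom.map_adjoin, FreeAlgebra.adjoin_range_ι, Algebra.map_top,
    AlgHom.range_eq_top]
  exact RingQuot.mkAlgHom_surjective R _

variable {α β φ}
variable {u' d' : E} (h : IsDownUpPair α β φ u' d')

/-- The homomorphism out of the down-up algebra determined by a pair satisfying its relations. -/
noncomputable def lift : DownUpAlgebra α β φ →ₐ[R] E :=
  RingQuot.liftAlgHom R ⟨FreeAlgebra.lift R (Gen.rec u' d'), by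
    rintro _ _ (_ | _)
    · simpa using h.ddu
    · simpa using h.duu⟩

@[simp]
theorem lift_u : lift h (u α β φ) = u' := by simp [lift, u]

@[simp]
theorem lift_d : lift h (d α β φ) = d' := by simp [lift, d]

end DownUpAlgebra

end Presentation

section BetaUnit

variable {R E : Type*} [CommRing R] [Ring E] [Algebra R E] {α β φ : R} {u d : E}

open scoped Polynomial.Bivariate
open Polynomial (aevalAeval)

/-- The endomorphism `x ↦ y`, `y ↦ α y + β x + φ` of `R[x, y]`, which describes how the commuting
elements `x = u d` and `y = d u` of a down-up algebra move past `u` and `d`. -/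
noncomputable def shift (α β φ : R) : R[X][Y] →ₐ[R] R[X][Y] :=
  aevalAeval .X (α • .X + β • .C .X + algebraMap R _ φ)

theorem shift_X : shift α β φ (.C .X) = .X := Polynomial.aevalAeval_X _ _

theorem shift_Y : shift α β φ .X = α • .X + β • .C .X + algebraMap R _ φ :=
  Polynomial.aevalAeval_Y _ _

/-- The automorphism `shift α β φ` for a unit `β`. -/
noncomputable def shiftEquiv (α φ : R) (β : Rˣ) : R[X][Y] ≃ₐ[R] R[X][Y] :=
  .ofAlgHom (shift α β φ) (aevalAeval ((β⁻¹ : Rˣ).1 • (.X - α • .C .X - algebraMap R _ φ)) (.C .X))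
    (by
      refine Polynomial.algHom_ext' (Polynomial.algHom_ext ?_) ?_
      · simp only [AlgHom.comp_apply, Polynomial.CAlgHom_apply, Polynomial.aevalAeval_X, map_smul,
          map_sub, shift_X, shift_Y, AlgHom.commutes, AlgHom.id_apply]
        rw [add_sub_right_comm, add_sub_cancel_right, add_sub_cancel_left, smul_smul,
          Units.inv_mul, one_smul]
      · rw [AlgHom.comp_apply, Polynomial.aevalAeval_Y, shift_X, AlgHom.id_apply])
    (by
      refine Polynomial.algHom_ext' (Polynomial.algHom_ext ?_) ?_
      · simp only [AlgHom.comp_apply, Polynomial.CAlgHom_apply, shift_X, Polynomial.aevalAeval_Y,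
          AlgHom.id_apply]
      · simp only [AlgHom.comp_apply, shift_Y, Polynomial.aevalAeval_X, Polynomial.aevalAeval_Y,
          map_add, map_smul, AlgHom.commutes, AlgHom.id_apply, smul_smul, Units.mul_inv, one_smul]
        abel)

namespace IsDownUpPair

theorem commute_u_mul_d_d_mul_u (h : IsDownUpPair α β φ u d) : Commute (u * d) (d * u) :=
  calc u * d * (d * u) = u * (d * d * u) := by noncomm_ring
    _ = (d * u * u) * d := by rw [h.ddu, h.duu]; noncomm_ring
    _ = d * u * (u * d) := by noncomm_ring

/-- Evaluation of a polynomial in `x`, `y` at the commuting elements `u d`, `d u`. -/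
noncomputable def polyEval (h : IsDownUpPair α β φ u d) : R[X][Y] →ₐ[R] E :=
  Polynomial.eval₂AlgHom (Polynomial.aeval (u * d)) (d * u) fun _ ↦
    (Algebra.commute_of_mem_adjoin_singleton_of_commute
      (Polynomial.aeval_mem_adjoin_singleton R (u * d)) h.commute_u_mul_d_d_mul_u.symm).symm

variable (h : IsDownUpPair α β φ u d)
include h

theorem polyEval_X : h.polyEval (.C .X) = u * d := by simp [polyEval]

theorem polyEval_Y : h.polyEval .X = d * u := by simp [polyEval]

theorem polyEval_shift_Y : h.polyEval (shift α β φ .X) =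
    α • (d * u) + β • (u * d) + algebraMap R E φ := by
  rw [shift_Y, map_add, map_add, map_smul, map_smul, h.polyEval_X, h.polyEval_Y, AlgHom.commutes]

theorem semiconjBy_d_polyEval (b : R[X][Y]) :
    SemiconjBy d (h.polyEval b) (h.polyEval (shift α β φ b)) := by
  refine semiconjBy_bivariate_of_X_of_Y (g := h.polyEval.comp (shift α β φ)) ?_ ?_ b
  · rw [AlgHom.comp_apply, shift_X, polyEval_X, polyEval_Y, SemiconjBy, mul_assoc]
  · rw [AlgHom.comp_apply, polyEval_shift_Y, polyEval_Y, SemiconjBy, ← mul_assoc, h.ddu]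
    simp only [add_mul, smul_mul_assoc, Algebra.smul_def φ]

theorem semiconjBy_u_polyEval (b : R[X][Y]) :
    SemiconjBy u (h.polyEval (shift α β φ b)) (h.polyEval b) := by
  refine semiconjBy_bivariate_of_X_of_Y (f := h.polyEval.comp (shift α β φ)) ?_ ?_ b
  · rw [AlgHom.comp_apply, shift_X, polyEval_X, polyEval_Y, SemiconjBy, mul_assoc]
  · rw [AlgHom.comp_apply, polyEval_shift_Y, polyEval_Y, SemiconjBy, h.duu]
    simp only [mul_add, mul_smul_comm, mul_assoc, Algebra.smul_def φ, Algebra.commutes φ]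

end IsDownUpPair

theorem IsDownUpPair.isGeneralizedWeylPair {β : Rˣ} (h : IsDownUpPair α (β : R) φ u d) :
    IsGeneralizedWeylPair (shiftEquiv α φ β) h.polyEval (.C .X) u d where
  semiconjBy_d := h.semiconjBy_d_polyEval
  semiconjBy_u := h.semiconjBy_u_polyEval
  u_mul_d := h.polyEval_X.symm
  d_mul_u := h.polyEval_Y.symm.trans (congrArg _ shift_X.symm)

theorem isDownUpPair_single {B G : Type*} [CommRing B] [Algebra R B] [Group G]
    [MulSemiringAction G B] [SMulCommClass G R B] {g : G} {x : B}
    (hx : g • g • x = α • g • x + β • x + algebraMap R B φ) :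
    IsDownUpPair α β φ (SkewMonoidAlgebra.single g⁻¹ x) (SkewMonoidAlgebra.single g 1) where
  ddu := by
    simp [← SkewMonoidAlgebra.single_add, SkewMonoidAlgebra.smul_single, mul_smul, hx,
      Algebra.algebraMap_eq_smul_one]
  duu := by
    have hx' : g • x = α • x + β • g⁻¹ • x + algebraMap R B φ := by
      rw [eq_comm, ← inv_smul_smul g (g • x), hx]
      simp [smul_comm g⁻¹]
    simp [← SkewMonoidAlgebra.single_add, SkewMonoidAlgebra.smul_single, hx',
      Algebra.algebraMap_eq_smul_one, add_mul, mul_comm x (g⁻¹ • x)]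

theorem IsDownUpPair.map_polyEval_eq_single {G : Type*} [Group G] [MulSemiringAction G R[X][Y]]
    [SMulCommClass G R R[X][Y]] {g : G} (hg : g • (.C .X : R[X][Y]) = .X)
    (h : IsDownUpPair α β φ u d) {f : E →ₐ[R] SkewMonoidAlgebra R[X][Y] G}
    (hu : f u = SkewMonoidAlgebra.single g⁻¹ (.C .X)) (hd : f d = SkewMonoidAlgebra.single g 1)
    (b : R[X][Y]) : f (h.polyEval b) = SkewMonoidAlgebra.single 1 b := by
  let constants : R[X][Y] →ₐ[R] SkewMonoidAlgebra R[X][Y] G :=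
    { SkewMonoidAlgebra.singleOneRingHom with commutes' := fun _ ↦ rfl }
  refine DFunLike.congr_fun (f := f.comp h.polyEval) (g := constants)
    (Polynomial.algHom_ext' (Polynomial.algHom_ext ?_) ?_) b
  · change f (h.polyEval (.C .X)) = SkewMonoidAlgebra.single 1 (.C .X)
    rw [h.polyEval_X, map_mul, hu, hd, SkewMonoidAlgebra.single_mul_single, inv_mul_cancel,
      smul_one, mul_one]
  · change f (h.polyEval .X) = SkewMonoidAlgebra.single 1 .X
    rw [h.polyEval_Y, map_mul, hu, hd, SkewMonoidAlgebra.single_mul_single, mul_inv_cancel, hg,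
      one_mul]

open Multiplicative (ofAdd)

theorem DownUpAlgebra.noZeroDivisors_of_isUnit [IsDomain R] (hβ : IsUnit β) :
    NoZeroDivisors (DownUpAlgebra α β φ) := by
  obtain ⟨β, rfl⟩ := hβ
  let σ := shiftEquiv α φ β
  let _ : MulSemiringAction (Multiplicative ℤ) R[X][Y] :=
    MulSemiringAction.compHom _ (zpowersHom (R[X][Y] ≃ₐ[R] R[X][Y]) σ)
  have : SMulCommClass (Multiplicative ℤ) R R[X][Y] := ⟨fun n r b ↦ map_smul (σ ^ n.toAdd) r b⟩
  have smul_eq (b : R[X][Y]) : ofAdd (1 : ℤ) • b = shift α β φ b :=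
    congrArg (fun τ : R[X][Y] ≃ₐ[R] R[X][Y] ↦ τ b) (zpow_one σ)
  have hpair : IsDownUpPair α (β : R) φ
      (SkewMonoidAlgebra.single (ofAdd (1 : ℤ))⁻¹ (.C .X : R[X][Y]))
      (SkewMonoidAlgebra.single (ofAdd (1 : ℤ)) 1) :=
    isDownUpPair_single (by simp only [smul_eq, shift_X, shift_Y])
  have h := isDownUpPair α (β : R) φ
  have lift_polyEval (b : R[X][Y]) : lift hpair (h.polyEval b) = SkewMonoidAlgebra.single 1 b :=
    h.map_polyEval_eq_single ((smul_eq _).trans shift_X) (lift_u hpair) (lift_d hpair) b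
  have X_ne_zero : (.C .X : R[X][Y]) ≠ 0 := Polynomial.C_ne_zero.mpr Polynomial.X_ne_zero
  have lift_injective : Function.Injective (lift hpair) :=
    h.isGeneralizedWeylPair.injective_of_map_eq_single (f := (lift hpair).toRingHom)
      (lift_d hpair) X_ne_zero (lift_u hpair) (adjoin_eq_top _ _ _) lift_polyEval
  exact lift_injective.noZeroDivisors (lift hpair) (map_zero _) (map_mul _)

end BetaUnit

section Verma

variable {R B : Type*} [CommRing R] [CommRing B] [Algebra R B] {w : ℕ → B}

open scoped Polynomial

/-- The weighted lowering operator `Xᵐ⁺¹ ↦ w m Xᵐ`, `1 ↦ 0` on `B[X]`. Together with multiplication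
by `X` it makes `B[X]` a Verma module with weights `w`. -/
noncomputable def lower (w : ℕ → B) : Module.End B B[X] :=
  Polynomial.lsum fun
    | 0 => 0
    | m + 1 => w m • Polynomial.monomial m

theorem coeff_lower (f : B[X]) (m : ℕ) : (lower w f).coeff m = w m * f.coeff (m + 1) := by
  induction f using Polynomial.induction_on' with
  | add f g hf hg => rw [map_add, Polynomial.coeff_add, Polynomial.coeff_add, hf, hg, mul_add]
  | monomial n b =>
    rw [lower, Polynomial.lsum_apply, Polynomial.sum_monomial_index _ _ (by rw [map_zero])]
    cases n with
    | zero => simp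
    | succ n =>
      by_cases hn : n = m
      · simp [hn]
      · simp [Polynomial.coeff_monomial, hn]

theorem coeff_lower_pow (k : ℕ) (f : B[X]) (m : ℕ) :
    ((lower w ^ k) f).coeff m = (∏ i ∈ Finset.range k, w (m + i)) * f.coeff (m + k) := by
  induction k generalizing f with
  | zero => simp
  | succ k ih =>
    rw [pow_succ, Module.End.mul_apply, ih, coeff_lower, Finset.prod_range_succ, mul_assoc]
    rfl

theorem lower_pow_of_natDegree_le {f : B[X]} {k : ℕ} (hf : f.natDegree ≤ k) :
    (lower w ^ k) f = ((∏ i ∈ Finset.range k, w i) * f.coeff k) • 1 := by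
  ext m
  rw [coeff_lower_pow, Polynomial.coeff_smul, Polynomial.coeff_one]
  rcases m.eq_zero_or_pos with rfl | hm
  · simp
  · rw [Polynomial.coeff_eq_zero_of_natDegree_lt (by lia), mul_zero, if_neg hm.ne', smul_zero]

theorem isDownUpPair_mulLeft_X_lower {α φ : R}
    (hw : ∀ m, w (m + 1) = α • w m + algebraMap R B φ) :
    IsDownUpPair α 0 φ (LinearMap.mulLeft B (Polynomial.X : B[X])) (lower w) where
  ddu := by
    refine LinearMap.ext fun f ↦ Polynomial.ext fun m ↦ ?_
    simp only [Module.End.mul_apply, LinearMap.add_apply, LinearMap.smul_apply,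
      LinearMap.mulLeft_apply, Polynomial.coeff_add, Polynomial.coeff_smul, coeff_lower,
      Polynomial.coeff_X_mul, hw, zero_smul, add_zero]
    simp only [Algebra.smul_def]
    ring
  duu := by
    refine LinearMap.ext fun f ↦ Polynomial.ext fun m ↦ ?_
    cases m with
    | zero => simp [coeff_lower, Module.End.mul_apply]
    | succ m =>
      simp only [Module.End.mul_apply, LinearMap.add_apply, LinearMap.smul_apply,
        LinearMap.mulLeft_apply, Polynomial.coeff_add, Polynomial.coeff_smul, coeff_lower,
        Polynomial.coeff_X_mul, hw, zero_smul, add_zero]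
      simp only [Algebra.smul_def]
      ring

theorem exists_mul_mulLeft_X_pow_mul_lower_pow_mul_ne_zero [IsDomain B] (hw : ∀ m, w m ≠ 0)
    {f g : Module.End B B[X]} (hf : f ≠ 0) (hg : g ≠ 0) :
    ∃ k n, f * (LinearMap.mulLeft B Polynomial.X ^ k * lower w ^ n) * g ≠ 0 := by
  obtain ⟨k, hk⟩ : ∃ k, f (Polynomial.X ^ k) ≠ 0 := by
    contrapose! hf
    exact Polynomial.lhom_ext' fun k ↦ LinearMap.ext_ring 
      (by simpa [Polynomial.X_pow_eq_monomial] using hf k)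
  obtain ⟨v, hv⟩ : ∃ v, g v ≠ 0 := by
    contrapose! hg
    exact LinearMap.ext hg
  refine ⟨k, (g v).natDegree, fun h ↦ ?_⟩
  have happly := LinearMap.congr_fun h v
  simp only [Module.End.mul_apply, lower_pow_of_natDegree_le le_rfl, map_smul,
    LinearMap.pow_mulLeft, LinearMap.mulLeft_apply, mul_one, LinearMap.zero_apply] at happly
  refine smul_ne_zero (mul_ne_zero ?_ ?_) hk happly
  · exact Finset.prod_ne_zero_iff.mpr fun i _ ↦ hw i
  · exact Polynomial.leadingCoeff_ne_zero.mpr hv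

/-- The weights `w₀ = y`, `wₘ₊₁ = α wₘ + φ` of the generic Verma module: the eigenvalues of `d u`
on the powers of `X`. -/
noncomputable def vermaWeight (α φ : R) (m : ℕ) : R[X] :=
  (fun q : R[X] ↦ α • q + algebraMap R R[X] φ)^[m] .X

theorem vermaWeight_succ (α φ : R) (m : ℕ) :
    vermaWeight α φ (m + 1) = α • vermaWeight α φ m + algebraMap R R[X] φ :=
  Function.iterate_succ_apply' _ _ _

theorem coeff_one_vermaWeight (α φ : R) (m : ℕ) : (vermaWeight α φ m).coeff 1 = α ^ m := by
  induction m with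
  | zero => exact (Polynomial.coeff_X_one (R := R)).trans (pow_zero α).symm
  | succ m ih =>
    rw [vermaWeight_succ, Polynomial.coeff_add, Polynomial.coeff_smul, ih, smul_eq_mul, pow_succ',
      Polynomial.algebraMap_apply, Polynomial.coeff_C_succ, add_zero]

theorem vermaWeight_ne_zero [IsDomain R] {α φ : R} (h : α ≠ 0 ∨ φ ≠ 0) (m : ℕ) :
    vermaWeight α φ m ≠ 0 := by
  rcases eq_or_ne α 0 with rfl | hα
  · cases m with
    | zero => exact Polynomial.X_ne_zero (R := R)
    | succ m => simpa [vermaWeight_succ] using h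
  · intro hzero
    simpa [hzero, hα] using (coeff_one_vermaWeight α φ m).symm

end Verma

section BetaZero

variable {R E : Type*} [CommRing R] [Ring E] [Algebra R E] {α φ : R} {u d : E}

open scoped Polynomial

/-- The endomorphism `y ↦ α y + φ` of `R[y]`, which describes how the element `y = d u` of a down-up
algebra with `β = 0` moves past `u` and `d`. -/
noncomputable def affineShift (α φ : R) : R[X] →ₐ[R] R[X] :=
  Polynomial.aeval (α • .X + algebraMap R R[X] φ)

theorem aeval_affineShift_X (y : E) :
    Polynomial.aeval y (affineShift α φ .X) = α • y + algebraMap R E φ := by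
  simp [affineShift]

namespace IsDownUpPair

variable (h : IsDownUpPair α 0 φ u d)
include h

theorem semiconjBy_d_aeval (q : R[X]) :
    SemiconjBy d (Polynomial.aeval (d * u) q) (Polynomial.aeval (d * u) (affineShift α φ q)) := by
  refine semiconjBy_polynomial_of_X (g := (Polynomial.aeval (d * u)).comp (affineShift α φ)) ?_ q
  rw [AlgHom.comp_apply, aeval_affineShift_X, Polynomial.aeval_X, SemiconjBy, ← mul_assoc, h.ddu]
  simp only [zero_smul, add_zero, add_mul, smul_mul_assoc, Algebra.smul_def φ]

theorem semiconjBy_u_aeval (q : R[X]) :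
    SemiconjBy u (Polynomial.aeval (d * u) (affineShift α φ q)) (Polynomial.aeval (d * u) q) := by
  refine semiconjBy_polynomial_of_X (f := (Polynomial.aeval (d * u)).comp (affineShift α φ)) ?_ q
  rw [AlgHom.comp_apply, aeval_affineShift_X, Polynomial.aeval_X, SemiconjBy, h.duu]
  simp only [zero_smul, add_zero, mul_add, mul_smul_comm, mul_assoc, Algebra.smul_def φ,
    Algebra.commutes φ]

theorem exists_semiconjBy_u_pow_aeval (i : ℕ) (q : R[X]) :
    ∃ q' : R[X],
      SemiconjBy (u ^ i) (Polynomial.aeval (d * u) q') (Polynomial.aeval (d * u) q) := by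
  induction i with
  | zero => exact ⟨q, by simp⟩
  | succ i ih =>
    obtain ⟨q', hq'⟩ := ih
    exact ⟨affineShift α φ q', pow_succ u i ▸ hq'.mul_left (h.semiconjBy_u_aeval q')⟩

theorem span_u_pow_mul_aeval_mul_d_pow_eq_top (hgen : Algebra.adjoin R {u, d} = ⊤) :
    Submodule.span R (Set.range fun p : ℕ × R[X] × ℕ ↦
      u ^ p.1 * Polynomial.aeval (d * u) p.2.1 * d ^ p.2.2) = ⊤ := by
  refine span_eq_top_of_adjoin_eq_top hgen ⟨(0, 1, 0), by simp⟩ ?_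
  rintro _ (rfl | rfl) _ ⟨⟨i, q, k⟩, rfl⟩
  · exact ⟨(i + 1, q, k), by simp only [pow_succ', mul_assoc]⟩
  · cases i with
    | zero =>
      refine ⟨(0, affineShift α φ q, k + 1), ?_⟩
      simp only [pow_zero, one_mul, pow_succ', ← mul_assoc, (h.semiconjBy_d_aeval q).eq]
    | succ i =>
      obtain ⟨q', hq'⟩ := h.exists_semiconjBy_u_pow_aeval i .X
      refine ⟨(i, q' * q, k), ?_⟩
      simp only [map_mul, ← mul_assoc, hq'.eq, Polynomial.aeval_X, pow_succ']

end IsDownUpPair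

/-- The sum `∑ uⁱ qᵢ(d u)` attached to `∑ qᵢ Xⁱ`, which maps the highest weight vector of the
generic Verma module to `∑ qᵢ Xⁱ`. -/
noncomputable def upSum (u d : E) : R[X][X] →ₗ[R] E :=
  Polynomial.lsum fun i ↦ (LinearMap.mulLeft R (u ^ i)).comp (Polynomial.aeval (d * u)).toLinearMap

/-- The sum `∑ uⁱ qᵢₖ(d u) dᵏ` attached to `∑ qᵢₖ Xⁱ Yᵏ`, the normal form of an element of a down-up
algebra with `β = 0`. -/
noncomputable def upDownSum (u d : E) : R[X][X][X] →ₗ[R] E :=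
  Polynomial.lsum fun k ↦ (LinearMap.mulRight R (d ^ k)).comp (upSum u d)

theorem upSum_monomial (i : ℕ) (q : R[X]) :
    upSum u d (.monomial i q) = u ^ i * Polynomial.aeval (d * u) q := by
  simp [upSum, Polynomial.lsum_apply, Polynomial.sum_monomial_index]

theorem upDownSum_apply (F : R[X][X][X]) :
    upDownSum u d F = ∑ k ∈ F.support, upSum u d (F.coeff k) * d ^ k := rfl

theorem upDownSum_monomial (k : ℕ) (f : R[X][X]) :
    upDownSum u d (.monomial k f) = upSum u d f * d ^ k := by
  simp [upDownSum, Polynomial.lsum_apply, Polynomial.sum_monomial_index]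

theorem IsDownUpPair.upDownSum_surjective (h : IsDownUpPair α 0 φ u d)
    (hgen : Algebra.adjoin R {u, d} = ⊤) : Function.Surjective (upDownSum (R := R) u d) := by
  rw [← LinearMap.range_eq_top, ← top_le_iff, ← h.span_u_pow_mul_aeval_mul_d_pow_eq_top hgen,
    Submodule.span_le]
  rintro _ ⟨⟨i, q, k⟩, rfl⟩
  exact ⟨.monomial k (.monomial i q), by rw [upDownSum_monomial, upSum_monomial]⟩

section Faithful

variable {w : ℕ → R[X]} {ρ : E →ₐ[R] Module.End R[X] R[X][X]}
  (hu : ρ u = LinearMap.mulLeft R[X] .X) (hd : ρ d = lower w)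
include hu hd

theorem map_aeval_apply_one (hw : w 0 = .X) (q : R[X]) :
    ρ (Polynomial.aeval (d * u) q) 1 = .C q := by
  have map_d_mul_u_C (q : R[X]) : ρ (d * u) (.C q) = .C (.X * q) := by
    ext m : 1
    rw [map_mul, hu, hd, Module.End.mul_apply, coeff_lower, LinearMap.mulLeft_apply,
      Polynomial.coeff_X_mul, Polynomial.coeff_C, Polynomial.coeff_C]
    split_ifs with hm
    · rw [hm, hw]
    · rw [mul_zero]
  induction q using Polynomial.induction_on with
  | C r =>
    rw [Polynomial.aeval_C, AlgHom.commutes, Module.algebraMap_end_apply, ← Polynomial.C_1,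
      Polynomial.smul_C, ← Polynomial.C_1, Polynomial.smul_C, smul_eq_mul, mul_one]
  | add p q hp hq => rw [map_add, map_add, LinearMap.add_apply, hp, hq, Polynomial.C_add]
  | monomial n r ih =>
    rw [pow_succ, ← mul_assoc, mul_comm, map_mul, map_mul, Module.End.mul_apply, ih,
      Polynomial.aeval_X, map_d_mul_u_C]

theorem map_upSum_apply_one (hw : w 0 = .X) (f : R[X][X]) : ρ (upSum u d f) 1 = f := by
  induction f using Polynomial.induction_on' with
  | add f g hf hg => rw [map_add, map_add, LinearMap.add_apply, hf, hg]
  | monomial i q =>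
    rw [upSum_monomial, map_mul, Module.End.mul_apply, map_aeval_apply_one hu hd hw, map_pow, hu,
      LinearMap.pow_mulLeft, LinearMap.mulLeft_apply, mul_comm,
      Polynomial.C_mul_X_pow_eq_monomial]

theorem map_upDownSum_apply_X_pow_natTrailingDegree (hw : w 0 = .X) (F : R[X][X][X]) :
    ρ (upDownSum u d F) (.X ^ F.natTrailingDegree : R[X][X]) =
      (∏ i ∈ Finset.range F.natTrailingDegree, w i) • F.coeff F.natTrailingDegree := by
  rw [upDownSum_apply, map_sum, LinearMap.sum_apply,
    Finset.sum_eq_single F.natTrailingDegree]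
  · rw [map_mul, map_pow ρ, hd, Module.End.mul_apply,
      lower_pow_of_natDegree_le (Polynomial.natDegree_X_pow_le _), Polynomial.coeff_X_pow_self,
      mul_one, map_smul, map_upSum_apply_one hu hd hw]
  · intro k hk hne
    have hlt : F.natTrailingDegree < k :=
      (Polynomial.natTrailingDegree_le_of_mem_supp k hk).lt_of_ne' hne
    have hlower : (lower w ^ k) (.X ^ F.natTrailingDegree : R[X][X]) = 0 := by
      rw [lower_pow_of_natDegree_le ((Polynomial.natDegree_X_pow_le _).trans hlt.le),
        Polynomial.coeff_X_pow, if_neg hne, mul_zero, zero_smul]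
    rw [map_mul, map_pow ρ, hd, Module.End.mul_apply, hlower, map_zero]
  · intro hk
    rw [Polynomial.notMem_support_iff.mp hk, map_zero, zero_mul, map_zero, LinearMap.zero_apply]

theorem IsDownUpPair.injective_of_map_eq_lower [IsDomain R] (h : IsDownUpPair α 0 φ u d)
    (hgen : Algebra.adjoin R {u, d} = ⊤) (hw₀ : w 0 = .X) (hw : ∀ m, w m ≠ 0) :
    Function.Injective ρ := by
  refine (injective_iff_map_eq_zero ρ).mpr fun e he ↦ ?_
  obtain ⟨F, rfl⟩ := h.upDownSum_surjective hgen e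
  have hF := map_upDownSum_apply_X_pow_natTrailingDegree hu hd hw₀ F
  rw [he, LinearMap.zero_apply, eq_comm, smul_eq_zero] at hF
  have trailingCoeff_eq_zero : F.trailingCoeff = 0 :=
    hF.resolve_left (Finset.prod_ne_zero_iff.mpr fun i _ ↦ hw i)
  rw [Polynomial.trailingCoeff_eq_zero.mp trailingCoeff_eq_zero, map_zero]

end Faithful

theorem DownUpAlgebra.isPrimeRing_of_ne_zero [IsDomain R] (h : α ≠ 0 ∨ φ ≠ 0) :
    IsPrimeRing (DownUpAlgebra α 0 φ) := by
  have hpair := isDownUpPair_mulLeft_X_lower (vermaWeight_succ α φ)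
  have lift_injective : Function.Injective (lift hpair) :=
    (isDownUpPair α 0 φ).injective_of_map_eq_lower (lift_u hpair) (lift_d hpair)
      (adjoin_eq_top _ _ _) rfl (vermaWeight_ne_zero h)
  intro a b hab
  contrapose! hab
  obtain ⟨k, n, hne⟩ := exists_mul_mulLeft_X_pow_mul_lower_pow_mul_ne_zero (vermaWeight_ne_zero h)
    ((map_ne_zero_iff _ lift_injective).mpr hab.1) ((map_ne_zero_iff _ lift_injective).mpr hab.2)
  refine ⟨u α 0 φ ^ k * d α 0 φ ^ n, fun hzero ↦ hne ?_⟩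
  simpa using congrArg (lift hpair) hzero

theorem IsDownUpPair.d_mul_d_mul_mul_u_eq_zero (h : IsDownUpPair (0 : R) 0 0 u d)
    (hgen : Algebra.adjoin R {u, d} = ⊤) (x : E) : d * d * x * u = 0 := by
  have ddu_eq_zero : d * d * u = 0 := by simpa using h.ddu
  have hx : x ∈ Submodule.span R _ :=
    (h.span_u_pow_mul_aeval_mul_d_pow_eq_top hgen).symm ▸ Submodule.mem_top
  induction hx using Submodule.span_induction with
  | zero => rw [mul_zero, zero_mul]
  | add x y _ _ hx hy => rw [mul_add, add_mul, hx, hy, add_zero]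
  | smul r x _ hx => rw [mul_smul_comm, smul_mul_assoc, hx, smul_zero]
  | mem x hx =>
    obtain ⟨⟨i, q, k⟩, rfl⟩ := hx
    change d * d * (u ^ i * Polynomial.aeval (d * u) q * d ^ k) * u = 0
    cases i with
    | zero =>
      have hq := (h.semiconjBy_d_aeval _).mul_left (h.semiconjBy_d_aeval q)
      have hd : Commute (d * d) (d ^ k) := .pow_right (.mul_left (.refl d) (.refl d)) k
      rw [pow_zero, one_mul, ← mul_assoc, hq.eq, mul_assoc, mul_assoc, ← mul_assoc (d * d), hd.eq,
        mul_assoc, ddu_eq_zero, mul_zero, mul_zero]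
    | succ i =>
      rw [pow_succ', mul_assoc u, mul_assoc u, ← mul_assoc, ddu_eq_zero, zero_mul, zero_mul]

theorem DownUpAlgebra.not_isPrimeRing_zero [Nontrivial R] :
    ¬ IsPrimeRing (DownUpAlgebra (0 : R) 0 0) := by
  have hu : IsDownUpPair (0 : R) 0 0 (1 : R) 0 := ⟨by simp, by simp⟩
  have hd : IsDownUpPair (0 : R) 0 0 (0 : R) 1 := ⟨by simp, by simp⟩
  intro hprime
  rcases hprime _ _ ((isDownUpPair (0 : R) 0 0).d_mul_d_mul_mul_u_eq_zero (adjoin_eq_top _ _ _))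
    with hzero | hzero
  · simpa using congrArg (lift hd) hzero
  · simpa using congrArg (lift hu) hzero

end BetaZero

end DownUp

open DownUp in
theorem downUp_prime_iff_general {R : Type*} [CommRing R] [IsDomain R] {α β φ : R}
    (hβ : β = 0 ∨ IsUnit β) :
    IsPrimeRing (DownUpAlgebra α β φ) ↔ ¬(α = 0 ∧ β = 0 ∧ φ = 0) := by
  rcases hβ with rfl | hβ
  · refine ⟨?_, fun h ↦ DownUpAlgebra.isPrimeRing_of_ne_zero (by tauto)⟩
    rintro hprime ⟨rfl, -, rfl⟩
    exact DownUpAlgebra.not_isPrimeRing_zero hprime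
  · have := DownUpAlgebra.noZeroDivisors_of_isUnit (α := α) (φ := φ) hβ
    exact iff_of_true (isPrimeRing_of_noZeroDivisors _) fun h ↦ hβ.ne_zero h.2.1

open DownUp in
/-- The down-up algebra A(α,β,φ) over K[t₁,…,tₙ] is a prime ring (in the
elementwise formulation: aAb = 0 implies a = 0 or b = 0) if and only if not
all of α, β, φ are zero. -/
theorem downUp_prime_iff {K : Type} [Field K] {n : ℕ}
    (α β : K) (φ : MvPolynomial (Fin n) K) :
    (∀ a b : A α β φ, (∀ x : A α β φ, a * x * b = 0) → a = 0 ∨ b = 0) ↔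
      ¬(α = 0 ∧ β = 0 ∧ φ = 0) := by
  have C_eq_zero_or_isUnit : (C β : MvPolynomial (Fin n) K) = 0 ∨
      IsUnit (C β : MvPolynomial (Fin n) K) := by
    rcases eq_or_ne β 0 with rfl | hβ
    · exact .inl C_0
    · exact .inr (hβ.isUnit.map C)
  change IsPrimeRing (RingQuot (Rel α β φ)) ↔ _
  rw [rel_eq_downUpRel, downUp_prime_iff_general C_eq_zero_or_isUnit, C_eq_zero, C_eq_zero]
end
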